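/- arXiv:2511.00257 — 2 statements merged into one kernel-verified Lean document; each statement's English description precedes it below -/
import Mathlib

section
/- In the reduced BwE setting with parameters k ≥ 1 and n > 10, let T ≥ k·ln(n/10) and set ε = √( k·ln(n/10) / (100·T) ) (so 0 < ε ≤ 0.1). Then for every learner there exists a strategy S in the pool {S_0} ∪ {S_{(u,v)} : u ∈ [k], v ∈ [n]} (with this ε) under which the learner's pseudo-regret over T rounds satisfies R_T > √( T·k·ln(n/10) ) / 100000. -/
open scoped BigOperators ENNReal

/-! ## The reduced BwE setting

There are `K = 2k+1` arms: arm `0` (encoded `none`) and arms `(u,i)` for `u ∈ [k]`,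
`i ∈ {0,1}` (encoded `some (u, i)`), and `N = kn+1` experts: expert `0` (encoded `none`,
always advising arm `0`) and experts `(u,v)` for `u ∈ [k]`, `v ∈ [n]`
(encoded `some (u, v)`, advising arm `(u, a_t^{(u,v)})`). -/

/-- An arm: `none` is arm `0`, `some (u, i)` is arm `(u,i)` of batch `u`. -/
abbrev RArm (k : ℕ) := Option (Fin k × Bool)

/-- The advice state: for each batch `u`, the advice vector `a^{(u)} ∈ {0,1}ⁿ`. -/
abbrev RAdviceM (k n : ℕ) := Fin k → Fin n → Bool

/-- An expert: `none` is expert `0`, `some (u, v)` is expert `(u,v)` of batch `u`. -/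
abbrev RExpert (k n : ℕ) := Option (Fin k × Fin n)

/-- The loss state of a round: the correct arm `c_u` of every batch `u` (the arm
`(u, c_u)` has loss `0` and the arm `(u, ¬c_u)` has loss `1`), together with the
binary loss of arm `0`. -/
abbrev RLossState (k : ℕ) := (Fin k → Bool) × Bool

/-- A full record of one round: the advice state, the loss state, and the pulled arm. -/
abbrev RRecord (k n : ℕ) := RAdviceM k n × RLossState k × RArm k

/-- What the learner observes in one round: the advice state, the arm it pulled,
and the loss of that arm only. -/
abbrev RObs (k n : ℕ) := RAdviceM k n × RArm k × Bool

/-- A strategy from the pool: `none` is `S_0`, and `some (u*, v*)` is `S_{(u*,v*)}`. -/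
abbrev RStrategy (k n : ℕ) := Option (Fin k × Fin n)

/-- The `{0,1}`-loss (as a `Bool`, `true` = loss `1`) of an arm, given the loss state. -/
def armLoss {k : ℕ} (L : RLossState k) : RArm k → Bool
  | none => L.2
  | some (u, i) => if i = L.1 u then false else true

/-- The loss of an arm as a real number in `{0,1}`. -/
noncomputable def lossVal (b : Bool) : ℝ := if b then 1 else 0

/-- The batch of an arm (`none` = batch `0`). -/
def armBatch {k : ℕ} : RArm k → Option (Fin k) := Option.map Prod.fst

/-- The arm advised by an expert, given the advice state. -/
def expertArm {k n : ℕ} (A : RAdviceM k n) : RExpert k n → RArm k :=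
  Option.map fun p => (p.1, A p.1 p.2)

/-- The special batch of a strategy: batch `0` (i.e. `none`) for `S_0`,
and batch `u*` for `S_{(u*,v*)}`. -/
def specialBatch {k n : ℕ} : RStrategy k n → Option (Fin k) := Option.map Prod.fst

/-- Density of the advice process given the history (most recent record first):
in the first round the advice state is uniform; afterwards, batch `u`'s advice vector
is resampled uniformly from `{0,1}ⁿ` if an arm of batch `u` was pulled in the previous
round, and is kept unchanged otherwise. -/
noncomputable def adviceDensity {k n : ℕ} (hist : List (RRecord k n)) (A : RAdviceM k n) : ℝ :=
  match hist with
  | [] => (1 / 2 : ℝ) ^ (k * n)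
  | r :: _ =>
      ∏ u : Fin k,
        if armBatch r.2.2 = some u then (1 / 2 : ℝ) ^ n
        else if A u = r.1 u then 1 else 0

/-- Density of the correct arm of batch `u`: uniform under `S_0` and for all
non-special batches; under `S_{(u*,v*)}` the correct arm of batch `u*` equals
the advice `a^{(u*,v*)}` of expert `(u*,v*)` with probability `1/2 + ε`. -/
noncomputable def batchFactor {k n : ℕ} (ε : ℝ) (s : RStrategy k n) (A : RAdviceM k n)
    (c : Fin k → Bool) (u : Fin k) : ℝ :=
  match s with
  | none => 1 / 2
  | some (u', v') =>
      if u = u' then (if c u = A u v' then 1 / 2 + ε else 1 / 2 - ε) else 1 / 2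

/-- Density of the loss state: arm `0` has loss `1` with probability `1/2 − ε/2`
(i.e. `ℓ_t(0) ∼ Ber(1/2 − ε/2)`), and the correct arms are drawn independently
according to `batchFactor`. -/
noncomputable def lossDensity {k n : ℕ} (ε : ℝ) (s : RStrategy k n) (A : RAdviceM k n)
    (L : RLossState k) : ℝ :=
  (if L.2 then 1 / 2 - ε / 2 else 1 / 2 + ε / 2) * ∏ u : Fin k, batchFactor ε s A L.1 u

/-- Density of the adversary's round output (advice state and loss state) given the
history, under strategy `s` with bias `ε`. -/
noncomputable def stratDensity {k n : ℕ} (ε : ℝ) (s : RStrategy k n)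
    (hist : List (RRecord k n)) (A : RAdviceM k n) (L : RLossState k) : ℝ :=
  adviceDensity hist A * lossDensity ε s A L

/-- A (randomized) learner: given the observed history (most recent first) and the
current round's advice state, a density over which arm to pull. -/
def RLearner (k n : ℕ) := List (RObs k n) → RAdviceM k n → RArm k → ℝ

/-- The learner's values form probability distributions over arms. -/
def IsRLearner {k n : ℕ} (f : RLearner k n) : Prop :=
  ∀ h A, (∀ i, 0 ≤ f h A i) ∧ ∑ i : RArm k, f h A i = 1

/-- The learner's observation extracted from a full record: it sees the advice,
its pulled arm, and only the loss of the pulled arm. -/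
def obsOf {k n : ℕ} (r : RRecord k n) : RObs k n := (r.1, r.2.2, armLoss r.2.1 r.2.2)

/-- The history of the first `t` rounds of a trajectory, most recent first. -/
def histUpTo {k n T : ℕ} (g : Fin T → RRecord k n) (t : ℕ) : List (RRecord k n) :=
  ((List.ofFn g).take t).reverse

/-- The learner's observed history of the first `t` rounds, most recent first. -/
def obsHist {k n T : ℕ} (g : Fin T → RRecord k n) (t : ℕ) : List (RObs k n) :=
  (histUpTo g t).map obsOf

/-- Probability of a full `T`-round trajectory under strategy `s` and learner `L`
(product of the adversary's and the learner's densities, round by round). -/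
noncomputable def trajProb {k n : ℕ} (ε : ℝ) (s : RStrategy k n) (L : RLearner k n) (T : ℕ)
    (g : Fin T → RRecord k n) : ℝ :=
  ∏ t : Fin T,
    stratDensity ε s (histUpTo g t) (g t).1 (g t).2.1 *
      L (obsHist g t) (g t).1 (g t).2.2

/-- Expectation of a trajectory functional over the `T`-round interaction. -/
noncomputable def expectR {k n : ℕ} (ε : ℝ) (s : RStrategy k n) (L : RLearner k n) (T : ℕ)
    (f : (Fin T → RRecord k n) → ℝ) : ℝ :=
  ∑ g : Fin T → RRecord k n, trajProb ε s L T g * f g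

/-- The realized regret of a trajectory against expert `j`:
`Σ_t (ℓ_t(I_t) − ℓ_t(e_t(j)))`. -/
noncomputable def regretVs {k n T : ℕ} (g : Fin T → RRecord k n) (j : RExpert k n) : ℝ :=
  ∑ t : Fin T,
    (lossVal (armLoss (g t).2.1 (g t).2.2) - lossVal (armLoss (g t).2.1 (expertArm (g t).1 j)))

/-- The pseudo-regret over `T` rounds: `max_j E[Σ_t (ℓ_t(I_t) − ℓ_t(e_t(j)))]`. -/
noncomputable def pseudoRegret {k n : ℕ} (ε : ℝ) (s : RStrategy k n) (L : RLearner k n)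
    (T : ℕ) : ℝ :=
  ⨆ j : RExpert k n, expectR ε s L T fun g => regretVs g j

namespace ReducedBwE

variable {k n : ℕ}

/-- The marginal of one coordinate of a finite product distribution. -/
lemma sum_prod_mul_coord {ι α : Type*} [Fintype ι] [DecidableEq ι] [Fintype α]
    (K : ι → α → ℝ) (hK : ∀ i, ∑ a, K i a = 1) (i₀ : ι) (φ : α → ℝ) :
    ∑ x : ι → α, (∏ i, K i (x i)) * φ (x i₀) = ∑ a, K i₀ a * φ a := by
  have h1 : ∀ x : ι → α, (∏ i, K i (x i)) * φ (x i₀)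
      = ∏ i, (K i (x i) * if i = i₀ then φ (x i) else 1) := by
    intro x
    rw [Finset.prod_mul_distrib, Finset.prod_ite_eq']
    simp
  have h2 := Fintype.prod_sum (fun i (a : α) => K i a * if i = i₀ then φ a else 1)
  rw [Finset.sum_congr rfl fun x _ => h1 x, ← h2,
    Finset.prod_eq_single i₀ (fun i _ hi => by simp [hi, hK]) (by simp)]
  simp

/-- A finite product of probability densities is a probability density. -/
lemma sum_prod_eq_one {ι α : Type*} [Fintype ι] [DecidableEq ι] [Fintype α]
    (K : ι → α → ℝ) (hK : ∀ i, ∑ a, K i a = 1) :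
    ∑ x : ι → α, ∏ i, K i (x i) = 1 := by
  rw [← Fintype.prod_sum]; simp [hK]

/-- The density of the loss of the pulled arm. -/
noncomputable def armLossDensity (ε : ℝ) (s : RStrategy k n) (A : RAdviceM k n) :
    RArm k → Bool → ℝ
  | none, b => if b then 1 / 2 - ε / 2 else 1 / 2 + ε / 2
  | some (u, i), b => batchFactor ε s A (fun _ => xor b i) u

lemma batchFactor_eq (ε : ℝ) (s : RStrategy k n) (A : RAdviceM k n) (c : Fin k → Bool)
    (u : Fin k) : batchFactor ε s A c u = batchFactor ε s A (fun _ => c u) u := by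
  cases s <;> rfl

lemma sum_batchFactor (ε : ℝ) (s : RStrategy k n) (A : RAdviceM k n) (u : Fin k) :
    ∑ x : Bool, batchFactor ε s A (fun _ => x) u = 1 := by
  rcases s with _ | ⟨u', v'⟩
  · simp [batchFactor]
  · by_cases h : u = u' <;> cases hA : A u v' <;> simp [batchFactor, h] <;>
      (try subst h) <;> (try simp [hA]) <;> ring

lemma sum_lossDensity_mul (ε : ℝ) (s : RStrategy k n) (A : RAdviceM k n) (I : RArm k)
    (φ : Bool → ℝ) :
    ∑ L : RLossState k, lossDensity ε s A L * φ (armLoss L I)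
      = ∑ b, armLossDensity ε s A I b * φ b := by
  have hb := sum_batchFactor ε s A
  rw [Fintype.sum_prod_type]
  have e : ∀ c : Fin k → Bool, ∏ u, batchFactor ε s A c u
      = ∏ u, batchFactor ε s A (fun _ => c u) u :=
    fun c => Finset.prod_congr rfl fun u _ => batchFactor_eq ε s A c u
  rcases I with _ | ⟨u, i⟩
  · have h1 := sum_prod_eq_one (fun u x => batchFactor ε s A (fun _ => x) u) hb
    simp only [lossDensity, armLoss, armLossDensity, e]
    rw [Finset.sum_comm]
    refine Finset.sum_congr rfl fun b _ => ?_
    rw [← Finset.sum_mul, ← Finset.mul_sum _ _ (if b = true then 1 / 2 - ε / 2 else _), h1,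
      mul_one]
  · have h1 := sum_prod_mul_coord (fun u x => batchFactor ε s A (fun _ => x) u) hb u
      (fun x => φ (xor x i))
    have h2 : ∀ c : Fin k → Bool, ∑ b : Bool, lossDensity ε s A (c, b) *
        φ (armLoss (c, b) (some (u, i)))
        = (∏ u, batchFactor ε s A (fun _ => c u) u) * φ (xor (c u) i) := by
      intro c
      simp only [lossDensity, armLoss, e, Fintype.sum_bool]
      generalize ∏ u, batchFactor ε s A (fun _ => c u) u = p
      rcases Bool.eq_false_or_eq_true (c u) with hc | hc <;> cases i <;> simp [hc] <;> ring
    rw [Finset.sum_congr rfl fun c _ => h2 c, h1]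
    simp only [Fintype.sum_bool, armLossDensity]
    cases i <;> simp [add_comm]

lemma sum_lossDensity (ε : ℝ) (s : RStrategy k n) (A : RAdviceM k n) :
    ∑ L : RLossState k, lossDensity ε s A L = 1 := by
  have h := sum_lossDensity_mul ε s A none fun _ => 1
  simp only [mul_one] at h
  rw [h]
  simp [armLossDensity]; ring

lemma batchFactor_nonneg {ε : ℝ} (h0 : 0 ≤ ε) (h1 : ε ≤ 1 / 2) (s : RStrategy k n)
    (A : RAdviceM k n) (c : Fin k → Bool) (u : Fin k) : 0 ≤ batchFactor ε s A c u := by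
  rcases s with _ | ⟨u', v'⟩ <;> simp only [batchFactor]
  · norm_num
  · split_ifs <;> linarith

lemma armLossDensity_nonneg {ε : ℝ} (h0 : 0 ≤ ε) (h1 : ε ≤ 1 / 2) (s : RStrategy k n)
    (A : RAdviceM k n) (I : RArm k) (b : Bool) : 0 ≤ armLossDensity ε s A I b := by
  rcases I with _ | ⟨u, i⟩ <;> simp only [armLossDensity]
  · split_ifs <;> linarith
  · exact batchFactor_nonneg h0 h1 _ _ _ _

lemma sum_armLossDensity (ε : ℝ) (s : RStrategy k n) (A : RAdviceM k n) (I : RArm k) :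
    ∑ b, armLossDensity ε s A I b = 1 := by
  have h := sum_lossDensity_mul ε s A I fun _ => 1
  simpa [sum_lossDensity] using h.symm

lemma lossDensity_nonneg {ε : ℝ} (h0 : 0 ≤ ε) (h1 : ε ≤ 1 / 2) (s : RStrategy k n)
    (A : RAdviceM k n) (L : RLossState k) : 0 ≤ lossDensity ε s A L := by
  unfold lossDensity
  refine mul_nonneg ?_ (Finset.prod_nonneg fun u _ => batchFactor_nonneg h0 h1 _ _ _ _)
  split_ifs <;> linarith

/-- The density of the next advice vector of one batch given the observed history. -/
noncomputable def batchAdvice (h : List (RObs k n)) (u : Fin k) (a : Fin n → Bool) : ℝ :=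
  match h with
  | [] => (1 / 2 : ℝ) ^ n
  | o :: _ => if armBatch o.2.1 = some u then (1 / 2 : ℝ) ^ n else if a = o.1 u then 1 else 0

lemma sum_uniform : ∑ _a : Fin n → Bool, (1 / 2 : ℝ) ^ n = 1 := by
  simp

lemma sum_batchAdvice (h : List (RObs k n)) (u : Fin k) : ∑ a, batchAdvice h u a = 1 := by
  rcases h with _ | ⟨o, h⟩ <;> simp only [batchAdvice]
  · exact sum_uniform
  · split_ifs
    · exact sum_uniform
    · simp

lemma batchAdvice_nonneg (h : List (RObs k n)) (u : Fin k) (a : Fin n → Bool) :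
    0 ≤ batchAdvice h u a := by
  rcases h with _ | ⟨o, h⟩ <;> simp only [batchAdvice]
  · positivity
  · split_ifs <;> positivity

/-- The density of the next advice state given the observed history. -/
noncomputable def obsAdvice (h : List (RObs k n)) (A : RAdviceM k n) : ℝ :=
  ∏ u, batchAdvice h u (A u)

lemma obsAdvice_nonneg (h : List (RObs k n)) (A : RAdviceM k n) : 0 ≤ obsAdvice h A :=
  Finset.prod_nonneg fun u _ => batchAdvice_nonneg h u (A u)

lemma sum_obsAdvice (h : List (RObs k n)) : ∑ A, obsAdvice h A = 1 :=
  sum_prod_eq_one (fun u a => batchAdvice h u a) (sum_batchAdvice h)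

lemma adviceDensity_eq (hist : List (RRecord k n)) (A : RAdviceM k n) :
    adviceDensity hist A = obsAdvice (hist.map obsOf) A := by
  rcases hist with _ | ⟨r, hist⟩
  · simp only [adviceDensity, obsAdvice, List.map_nil, batchAdvice]
    rw [Finset.prod_const, Finset.card_univ, Fintype.card_fin, ← pow_mul, mul_comm]
  · rfl

/-- One round of the interaction, as an operator on functionals of the observed history. -/
noncomputable def obsStep (ε : ℝ) (s : RStrategy k n) (L : RLearner k n) :
    (List (RObs k n) → ℝ) →ₗ[ℝ] (List (RObs k n) → ℝ) where
  toFun F h := ∑ A, obsAdvice h A * ∑ I, L h A I *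
    ∑ b, armLossDensity ε s A I b * F ((A, I, b) :: h)
  map_add' F G := by
    funext h
    simp only [Pi.add_apply, mul_add, Finset.sum_add_distrib]
  map_smul' c F := by
    funext h
    simp only [Pi.smul_apply, smul_eq_mul, RingHom.id_apply, Finset.mul_sum]
    refine Finset.sum_congr rfl fun A _ => Finset.sum_congr rfl fun I _ =>
      Finset.sum_congr rfl fun b _ => by ring

lemma obsStep_apply (ε : ℝ) (s : RStrategy k n) (L : RLearner k n) (F : List (RObs k n) → ℝ)
    (h : List (RObs k n)) : obsStep ε s L F h = ∑ A, obsAdvice h A * ∑ I, L h A I *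
      ∑ b, armLossDensity ε s A I b * F ((A, I, b) :: h) := rfl

/-- The expectation of a functional of the observed history after `T` rounds. -/
noncomputable def obsExpect (ε : ℝ) (s : RStrategy k n) (L : RLearner k n) (T : ℕ) :
    (List (RObs k n) → ℝ) →ₗ[ℝ] ℝ :=
  LinearMap.proj [] ∘ₗ (obsStep ε s L ^ T)

lemma obsExpect_zero (ε : ℝ) (s : RStrategy k n) (L : RLearner k n)
    (F : List (RObs k n) → ℝ) : obsExpect ε s L 0 F = F [] := rfl

lemma obsExpect_succ (ε : ℝ) (s : RStrategy k n) (L : RLearner k n) (T : ℕ)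
    (F : List (RObs k n) → ℝ) :
    obsExpect ε s L (T + 1) F = obsExpect ε s L T (obsStep ε s L F) := by
  simp [obsExpect, pow_succ]

lemma obsStep_mono {ε : ℝ} (h0 : 0 ≤ ε) (h1 : ε ≤ 1 / 2) (s : RStrategy k n)
    {L : RLearner k n} (hL : IsRLearner L) {F G : List (RObs k n) → ℝ} (h : List (RObs k n))
    (hFG : ∀ o, F (o :: h) ≤ G (o :: h)) : obsStep ε s L F h ≤ obsStep ε s L G h := by
  simp only [obsStep_apply]
  refine Finset.sum_le_sum fun A _ => mul_le_mul_of_nonneg_left ?_ (obsAdvice_nonneg h A)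
  refine Finset.sum_le_sum fun I _ => mul_le_mul_of_nonneg_left ?_ ((hL h A).1 I)
  exact Finset.sum_le_sum fun b _ => mul_le_mul_of_nonneg_left (hFG _)
    (armLossDensity_nonneg h0 h1 s A I b)

lemma obsExpect_mono {ε : ℝ} (h0 : 0 ≤ ε) (h1 : ε ≤ 1 / 2) (s : RStrategy k n)
    {L : RLearner k n} (hL : IsRLearner L) (T : ℕ) {F G : List (RObs k n) → ℝ}
    (hFG : ∀ h, h.length = T → F h ≤ G h) : obsExpect ε s L T F ≤ obsExpect ε s L T G := by
  induction T generalizing F G with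
  | zero => exact hFG [] rfl
  | succ T ih =>
    rw [obsExpect_succ, obsExpect_succ]
    exact ih fun h hh => obsStep_mono h0 h1 s hL h fun o => hFG _ (by simp [hh])

/-- If, given the advice of batch `u`, the conditional expectation of `F` does not depend on
the pulled arm, then only the law of that advice matters. -/
lemma obsStep_eq_of_advice (ε : ℝ) (s : RStrategy k n) {L : RLearner k n} (hL : IsRLearner L)
    (u : Fin k) {F : List (RObs k n) → ℝ} (h : List (RObs k n)) (φ : (Fin n → Bool) → ℝ)
    (hF : ∀ A I, ∑ b, armLossDensity ε s A I b * F ((A, I, b) :: h) = φ (A u)) :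
    obsStep ε s L F h = ∑ a, batchAdvice h u a * φ a := by
  have h2 : ∀ A, ∑ I, L h A I * φ (A u) = φ (A u) := fun A => by
    rw [← Finset.sum_mul, (hL h A).2, one_mul]
  simp only [obsStep_apply, hF, h2]
  exact sum_prod_mul_coord (fun u a => batchAdvice h u a) (sum_batchAdvice h) u φ

lemma obsStep_eq_of_const (ε : ℝ) (s : RStrategy k n) {L : RLearner k n} (hL : IsRLearner L)
    {F : List (RObs k n) → ℝ} (h : List (RObs k n)) (c : ℝ)
    (hF : ∀ A I, ∑ b, armLossDensity ε s A I b * F ((A, I, b) :: h) = c) :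
    obsStep ε s L F h = c := by
  simp only [obsStep_apply, hF, ← Finset.sum_mul, (hL h _).2, one_mul, sum_obsAdvice]

lemma obsExpect_of_fixed {ε : ℝ} {s : RStrategy k n} {L : RLearner k n} (T : ℕ)
    {F : List (RObs k n) → ℝ} (hF : ∀ h, obsStep ε s L F h = F h) :
    obsExpect ε s L T F = F [] := by
  induction T with
  | zero => rfl
  | succ T ih => rw [obsExpect_succ, funext hF, ih]

lemma obsExpect_const (ε : ℝ) (s : RStrategy k n) {L : RLearner k n} (hL : IsRLearner L)
    (T : ℕ) (c : ℝ) : obsExpect ε s L T (fun _ => c) = c :=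
  obsExpect_of_fixed T fun h => obsStep_eq_of_const ε s hL h c fun A I => by
    rw [← Finset.sum_mul, sum_armLossDensity, one_mul]

/-! ### From trajectories to observed histories -/

lemma histUpTo_snoc {T : ℕ} (g : Fin T → RRecord k n) (r : RRecord k n) {t : ℕ} (ht : t ≤ T) :
    histUpTo (Fin.snoc g r : Fin (T + 1) → RRecord k n) t = histUpTo g t := by
  have : List.ofFn (Fin.snoc g r : Fin (T + 1) → RRecord k n) = List.ofFn g ++ [r] := by
    rw [List.ofFn_succ_last]; simp
  rw [histUpTo, histUpTo, this, List.take_append_of_le_length (by simpa using ht)]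

lemma histUpTo_snoc_last {T : ℕ} (g : Fin T → RRecord k n) (r : RRecord k n) :
    histUpTo (Fin.snoc g r : Fin (T + 1) → RRecord k n) (T + 1) = r :: histUpTo g T := by
  have : List.ofFn (Fin.snoc g r : Fin (T + 1) → RRecord k n) = List.ofFn g ++ [r] := by
    rw [List.ofFn_succ_last]; simp
  rw [histUpTo, histUpTo, this, List.take_of_length_le (by simp),
    List.take_of_length_le (by simp)]
  simp

lemma obsHist_snoc_last {T : ℕ} (g : Fin T → RRecord k n) (r : RRecord k n) :
    obsHist (Fin.snoc g r : Fin (T + 1) → RRecord k n) (T + 1) = obsOf r :: obsHist g T := by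
  rw [obsHist, histUpTo_snoc_last]; rfl

/-- Probability of the record of the next round given the trajectory so far. -/
noncomputable def roundProb (ε : ℝ) (s : RStrategy k n) (L : RLearner k n)
    (hist : List (RObs k n)) (r : RRecord k n) : ℝ :=
  obsAdvice hist r.1 * lossDensity ε s r.1 r.2.1 * L hist r.1 r.2.2

lemma trajProb_eq (ε : ℝ) (s : RStrategy k n) (L : RLearner k n) (T : ℕ)
    (g : Fin T → RRecord k n) :
    trajProb ε s L T g = ∏ t : Fin T, roundProb ε s L (obsHist g t) (g t) := by
  simp only [trajProb, stratDensity, roundProb, adviceDensity_eq, obsHist]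

lemma trajProb_nonneg {ε : ℝ} (h0 : 0 ≤ ε) (h1 : ε ≤ 1 / 2) (s : RStrategy k n)
    {L : RLearner k n} (hL : IsRLearner L) (T : ℕ) (g : Fin T → RRecord k n) :
    0 ≤ trajProb ε s L T g := by
  rw [trajProb_eq]
  exact Finset.prod_nonneg fun t _ => mul_nonneg (mul_nonneg (obsAdvice_nonneg _ _)
    (lossDensity_nonneg h0 h1 _ _ _)) ((hL _ _).1 _)

lemma trajProb_snoc (ε : ℝ) (s : RStrategy k n) (L : RLearner k n) (T : ℕ)
    (g : Fin T → RRecord k n) (r : RRecord k n) :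
    trajProb ε s L (T + 1) (Fin.snoc g r) = trajProb ε s L T g *
      roundProb ε s L (obsHist g T) r := by
  simp only [trajProb_eq]
  rw [Fin.prod_univ_castSucc]
  simp only [Fin.snoc_castSucc, Fin.snoc_last, Fin.val_castSucc, Fin.val_last, obsHist]
  rw [histUpTo_snoc g r le_rfl]
  congr 1
  exact Finset.prod_congr rfl fun t _ => by rw [histUpTo_snoc g r t.2.le]

lemma expectR_succ (ε : ℝ) (s : RStrategy k n) (L : RLearner k n) (T : ℕ)
    (f : (Fin (T + 1) → RRecord k n) → ℝ) :
    expectR ε s L (T + 1) f = expectR ε s L T fun g =>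
      ∑ r, roundProb ε s L (obsHist g T) r * f (Fin.snoc g r) := by
  unfold expectR
  rw [← (Fin.snocEquiv fun _ : Fin (T + 1) => RRecord k n).sum_comp, Fintype.sum_prod_type,
    Finset.sum_comm]
  refine Finset.sum_congr rfl fun g _ => ?_
  rw [Finset.mul_sum]
  refine Finset.sum_congr rfl fun r _ => ?_
  change trajProb ε s L (T + 1) (Fin.snoc g r) * f (Fin.snoc g r) = _
  rw [trajProb_snoc, mul_assoc]

lemma sum_roundProb_mul (ε : ℝ) (s : RStrategy k n) (L : RLearner k n)
    (h : List (RObs k n)) (f : RRecord k n → ℝ) :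
    ∑ r, roundProb ε s L h r * f r = ∑ A, obsAdvice h A * ∑ I, L h A I *
      ∑ ℓ, lossDensity ε s A ℓ * f (A, ℓ, I) := by
  rw [Fintype.sum_prod_type]
  refine Finset.sum_congr rfl fun A _ => ?_
  rw [Fintype.sum_prod_type, Finset.sum_comm]
  simp only [Finset.mul_sum, roundProb]
  refine Finset.sum_congr rfl fun I _ => Finset.sum_congr rfl fun ℓ _ => by ring

lemma expectR_obsHist (ε : ℝ) (s : RStrategy k n) (L : RLearner k n) (T : ℕ)
    (F : List (RObs k n) → ℝ) :
    expectR ε s L T (fun g => F (obsHist g T)) = obsExpect ε s L T F := by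
  induction T generalizing F with
  | zero => simp [expectR, trajProb, obsExpect_zero, obsHist, histUpTo]
  | succ T ih =>
    rw [expectR_succ, obsExpect_succ, ← ih]
    congr 1
    funext g
    simp only [obsHist_snoc_last]
    rw [sum_roundProb_mul, obsStep_apply]
    refine Finset.sum_congr rfl fun A _ => congrArg _ (Finset.sum_congr rfl fun I _ => ?_)
    rw [← sum_lossDensity_mul]
    rfl

lemma regretVs_snoc {T : ℕ} (g : Fin T → RRecord k n) (r : RRecord k n) (j : RExpert k n) :
    regretVs (Fin.snoc g r : Fin (T + 1) → RRecord k n) j = regretVs g j +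
      (lossVal (armLoss r.2.1 r.2.2) - lossVal (armLoss r.2.1 (expertArm r.1 j))) := by
  simp only [regretVs, Fin.sum_univ_castSucc, Fin.snoc_castSucc, Fin.snoc_last]

lemma expectR_nonneg_of_drift {ε : ℝ} (h0 : 0 ≤ ε) (h1 : ε ≤ 1 / 2) (s : RStrategy k n)
    {L : RLearner k n} (hL : IsRLearner L) (j : RExpert k n) (d : RArm k → ℝ)
    (hd : ∀ A I, d I ≤ armLossDensity ε s A I true
      - armLossDensity ε s A (expertArm A j) true) (T : ℕ) :
    0 ≤ expectR ε s L T fun g =>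
      regretVs g j - ((obsHist g T).map fun o => d o.2.1).sum := by
  induction T with
  | zero => simp [expectR, regretVs, obsHist, histUpTo]
  | succ T ih =>
    rw [expectR_succ]
    refine ih.trans (Finset.sum_le_sum fun g _ =>
      mul_le_mul_of_nonneg_left ?_ (trajProb_nonneg h0 h1 s hL T g))
    beta_reduce
    rw [sum_roundProb_mul]
    set X := regretVs g j - ((obsHist g T).map fun o => d o.2.1).sum with hX
    have key : ∀ A I, X ≤ ∑ ℓ, lossDensity ε s A ℓ *
        (regretVs (Fin.snoc g (A, ℓ, I) : Fin (T + 1) → RRecord k n) j -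
          ((obsHist (Fin.snoc g (A, ℓ, I) : Fin (T + 1) → RRecord k n) (T + 1)).map
            fun o => d o.2.1).sum) := by
      intro A I
      have e : ∀ ℓ, lossDensity ε s A ℓ *
        (regretVs (Fin.snoc g (A, ℓ, I) : Fin (T + 1) → RRecord k n) j -
          ((obsHist (Fin.snoc g (A, ℓ, I) : Fin (T + 1) → RRecord k n) (T + 1)).map
            fun o => d o.2.1).sum) = lossDensity ε s A ℓ * (X - d I)
            + lossDensity ε s A ℓ * lossVal (armLoss ℓ I)
            - lossDensity ε s A ℓ * lossVal (armLoss ℓ (expertArm A j)) := by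
        intro ℓ
        rw [regretVs_snoc, obsHist_snoc_last, List.map_cons, List.sum_cons]
        simp only [obsOf, hX]
        ring
      rw [Finset.sum_congr rfl fun ℓ _ => e ℓ, Finset.sum_sub_distrib, Finset.sum_add_distrib,
        ← Finset.sum_mul, sum_lossDensity, sum_lossDensity_mul, sum_lossDensity_mul]
      have := hd A I
      simp [lossVal]
      linarith
    calc X = ∑ A, obsAdvice (obsHist g T) A * ∑ I, L (obsHist g T) A I * X := by
          simp only [← Finset.sum_mul, (hL _ _).2, one_mul, sum_obsAdvice]
      _ ≤ _ := Finset.sum_le_sum fun A _ => mul_le_mul_of_nonneg_left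
          (Finset.sum_le_sum fun I _ => mul_le_mul_of_nonneg_left (key A I) ((hL _ _).1 I))
          (obsAdvice_nonneg _ A)

/-- A lower bound on the pseudo-regret from a lower bound `d` on the expected instantaneous
regret of every arm. -/
lemma le_pseudoRegret {ε : ℝ} (h0 : 0 ≤ ε) (h1 : ε ≤ 1 / 2) (s : RStrategy k n)
    {L : RLearner k n} (hL : IsRLearner L) (j : RExpert k n) (d : RArm k → ℝ)
    (hd : ∀ A I, d I ≤ armLossDensity ε s A I true
      - armLossDensity ε s A (expertArm A j) true) (T : ℕ) :
    obsExpect ε s L T (fun h => (h.map fun o => d o.2.1).sum) ≤ pseudoRegret ε s L T := by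
  have h := expectR_nonneg_of_drift h0 h1 s hL j d hd T
  have e : (expectR ε s L T fun g => regretVs g j - ((obsHist g T).map fun o => d o.2.1).sum)
      = (expectR ε s L T fun g => regretVs g j) -
        obsExpect ε s L T (fun h => (h.map fun o => d o.2.1).sum) := by
    rw [← expectR_obsHist]
    simp only [expectR, mul_sub, Finset.sum_sub_distrib]
  refine le_trans (by linarith) (le_ciSup (Set.finite_range fun j : RExpert k n =>
    expectR ε s L T fun g => regretVs g j).bddAbove j)

/-! ### Likelihood ratios -/

/-- The number of pulls of batch `u` in an observed history. -/
def pulls (u : Fin k) : List (RObs k n) → ℕ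
  | [] => 0
  | o :: h => if armBatch o.2.1 = some u then pulls u h + 1 else pulls u h

/-- The one-round likelihood ratio of `S_{(u,v)}` with respect to `S_0`. -/
noncomputable def roundLik (ε : ℝ) (u : Fin k) (v : Fin n) : RObs k n → ℝ
  | (_, none, _) => 1
  | (A, some (u', i), b) =>
      if u' = u then (if xor b i = A u v then 1 + 2 * ε else 1 - 2 * ε) else 1

lemma armLossDensity_some (ε : ℝ) (u : Fin k) (v : Fin n) (A : RAdviceM k n) (I : RArm k)
    (b : Bool) : armLossDensity ε (some (u, v)) A I b =
      armLossDensity ε none A I b * roundLik ε u v (A, I, b) := by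
  rcases I with _ | ⟨u', i⟩
  · simp [armLossDensity, roundLik]
  · by_cases h : u' = u
    · subst h
      simp only [armLossDensity, roundLik, batchFactor, if_true]
      split_ifs <;> ring
    · simp [armLossDensity, roundLik, batchFactor, h]

lemma roundLik_eq_one {ε : ℝ} {u : Fin k} {v : Fin n} {A : RAdviceM k n} {I : RArm k}
    {b : Bool} (h : armBatch I ≠ some u) : roundLik ε u v (A, I, b) = 1 := by
  rcases I with _ | ⟨u', i⟩
  · rfl
  · have : u' ≠ u := by simpa [armBatch] using h
    simp [roundLik, this]

lemma sum_roundLik (ε : ℝ) (u : Fin k) (v : Fin n) (A : RAdviceM k n) (I : RArm k) :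
    ∑ b, armLossDensity ε none A I b * roundLik ε u v (A, I, b) = 1 := by
  rw [← sum_armLossDensity ε (some (u, v)) A I]
  exact Finset.sum_congr rfl fun b _ => (armLossDensity_some ε u v A I b).symm

/-- The sign `±1` telling whether two experts of a batch agree. -/
def agreement (v v' : Fin n) (a : Fin n → Bool) : ℝ := if a v = a v' then 1 else -1

lemma sum_roundLik_mul (ε : ℝ) (u : Fin k) (v v' : Fin n) (A : RAdviceM k n) (I : RArm k) :
    ∑ b, armLossDensity ε none A I b *
      (roundLik ε u v (A, I, b) * roundLik ε u v' (A, I, b)) =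
      if armBatch I = some u then 1 + 4 * ε ^ 2 * agreement v v' (A u) else 1 := by
  split_ifs with h
  · rcases I with _ | ⟨u', i⟩
    · simp [armBatch] at h
    · have : u' = u := by simpa [armBatch] using h
      subst this
      simp only [armLossDensity, roundLik, batchFactor, if_true, agreement, Fintype.sum_bool]
      cases i <;> cases A u' v <;> cases A u' v' <;> simp <;> ring
  · simp only [roundLik_eq_one h, mul_one, sum_armLossDensity]

lemma sum_uniform_agreement {v v' : Fin n} (h : v ≠ v') :
    ∑ a : Fin n → Bool, agreement v v' a = 0 := by
  have hinv : Function.Involutive fun a : Fin n → Bool => Function.update a v (!a v) := by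
    intro a; simp
  have e : ∀ a, agreement v v' (hinv.toPerm _ a) = -agreement v v' a := by
    intro a
    simp only [Function.Involutive.coe_toPerm, agreement, Function.update_self,
      Function.update_of_ne h.symm]
    cases a v <;> cases a v' <;> simp
  have := Equiv.sum_comp (hinv.toPerm _) (agreement v v')
  simp only [e, Finset.sum_neg_distrib] at this
  linarith

/-- The likelihood ratio of `S_{(u,v)}` with respect to `S_0`. -/
noncomputable def lik (ε : ℝ) (u : Fin k) (v : Fin n) : List (RObs k n) → ℝ
  | [] => 1
  | o :: h => roundLik ε u v o * lik ε u v h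

/-- The likelihood ratio stopped after `m` pulls of batch `u`. -/
noncomputable def stoppedLik (ε : ℝ) (u : Fin k) (m : ℕ) (v : Fin n) : List (RObs k n) → ℝ
  | [] => 1
  | o :: h => if pulls u h < m then roundLik ε u v o * stoppedLik ε u m v h
      else stoppedLik ε u m v h

lemma stoppedLik_eq_lik (ε : ℝ) (u : Fin k) (m : ℕ) (v : Fin n) (h : List (RObs k n))
    (hm : pulls u h < m) : stoppedLik ε u m v h = lik ε u v h := by
  induction h with
  | nil => rfl
  | cons o h ih =>
    have : pulls u h < m := by
      unfold pulls at hm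
      split_ifs at hm <;> omega
    simp [stoppedLik, lik, this, ih this]

lemma obsExpect_some (ε : ℝ) (u : Fin k) (v : Fin n) (L : RLearner k n) (T : ℕ)
    (F : List (RObs k n) → ℝ) :
    obsExpect ε (some (u, v)) L T F = obsExpect ε none L T fun h => lik ε u v h * F h := by
  induction T generalizing F with
  | zero => simp [obsExpect_zero, lik]
  | succ T ih =>
    rw [obsExpect_succ, obsExpect_succ, ih]
    congr 1
    funext h
    simp only [obsStep_apply, armLossDensity_some, lik, Finset.mul_sum]
    refine Finset.sum_congr rfl fun A _ => Finset.sum_congr rfl fun I _ =>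
      Finset.sum_congr rfl fun b _ => by ring

lemma obsExpect_stoppedLik (ε : ℝ) (u : Fin k) (m : ℕ) (v : Fin n) {L : RLearner k n}
    (hL : IsRLearner L) (T : ℕ) : obsExpect ε none L T (stoppedLik ε u m v) = 1 := by
  refine obsExpect_of_fixed T fun h => obsStep_eq_of_const ε none hL h _ fun A I => ?_
  simp only [stoppedLik]
  split_ifs
  · simp only [← mul_assoc]
    rw [← Finset.sum_mul, sum_roundLik, one_mul]
  · rw [← Finset.sum_mul, sum_armLossDensity, one_mul]

/-- The indicator of at least `m` pulls of batch `u`. -/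
noncomputable def manyPulls (u : Fin k) (m : ℕ) (h : List (RObs k n)) : ℝ :=
  if m ≤ pulls u h then 1 else 0

/-- Change of measure for the event of at least `m` pulls, which is decided when the
likelihood ratio is stopped. -/
lemma obsExpect_manyPulls (ε : ℝ) (u : Fin k) (m : ℕ) (v : Fin n) {L : RLearner k n}
    (hL : IsRLearner L) (T : ℕ) :
    obsExpect ε (some (u, v)) L T (manyPulls u m)
      = obsExpect ε none L T fun h => stoppedLik ε u m v h * manyPulls u m h := by
  have h1 : obsExpect ε (some (u, v)) L T (manyPulls u m)
      = 1 - obsExpect ε (some (u, v)) L T fun h => 1 - manyPulls u m h := by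
    have := map_sub (obsExpect ε (some (u, v)) L T) (fun _ => 1) (manyPulls u m)
    rw [obsExpect_const ε _ hL] at this
    change (obsExpect ε (some (u, v)) L T fun h => 1 - manyPulls u m h) = _ at this
    linarith
  have h2 : (fun h : List (RObs k n) => lik ε u v h * (1 - manyPulls u m h))
      = stoppedLik ε u m v - fun h => stoppedLik ε u m v h * manyPulls u m h := by
    funext h
    by_cases hm : m ≤ pulls u h
    · simp [manyPulls, hm]
    · simp [manyPulls, hm, stoppedLik_eq_lik ε u m v h (by omega)]
  rw [h1, obsExpect_some, h2, map_sub, obsExpect_stoppedLik ε u m v hL]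
  ring

lemma obsExpect_stoppedLik_sq_le {ε : ℝ} (h0 : 0 ≤ ε) (h1 : ε ≤ 1 / 2) (u : Fin k) (m : ℕ)
    (v : Fin n) {L : RLearner k n} (hL : IsRLearner L) (T : ℕ) :
    obsExpect ε none L T (fun h => stoppedLik ε u m v h * stoppedLik ε u m v h)
      ≤ (1 + 4 * ε ^ 2) ^ m := by
  let Φ : List (RObs k n) → ℝ := fun h =>
    stoppedLik ε u m v h * stoppedLik ε u m v h * (1 + 4 * ε ^ 2) ^ (m - pulls u h)
  have hΦ : obsExpect ε none L T Φ = Φ [] := by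
    refine obsExpect_of_fixed T fun h => obsStep_eq_of_const ε none hL h _ fun A I => ?_
    simp only [Φ, stoppedLik, pulls]
    by_cases hm : pulls u h < m
    · have e := sum_roundLik_mul ε u v v A I
      simp only [agreement, if_true, mul_one] at e
      simp only [hm, if_true]
      set c := (1 + 4 * ε ^ 2) ^ (m - if armBatch I = some u then pulls u h + 1 else pulls u h)
        with hc
      calc _ = (∑ b, armLossDensity ε none A I b *
            (roundLik ε u v (A, I, b) * roundLik ε u v (A, I, b))) *
              (stoppedLik ε u m v h * stoppedLik ε u m v h * c) := by
            rw [Finset.sum_mul]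
            exact Finset.sum_congr rfl fun b _ => by ring
        _ = _ := by
          rw [e, hc]
          split_ifs
          · rw [show m - pulls u h = (m - (pulls u h + 1)) + 1 by omega, pow_succ]
            ring
          · ring
    · have e1 : m - pulls u h = 0 := by omega
      have e2 : (m - if armBatch I = some u then pulls u h + 1 else pulls u h) = 0 := by
        split_ifs <;> omega
      simp only [hm, if_false, e1, e2]
      rw [← Finset.sum_mul, sum_armLossDensity, one_mul]
  have e : Φ [] = (1 + 4 * ε ^ 2) ^ m := by simp [Φ, stoppedLik, pulls]
  rw [← e, ← hΦ]
  refine obsExpect_mono h0 h1 none hL T fun h _ => ?_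
  exact le_mul_of_one_le_right (mul_self_nonneg _) (one_le_pow₀ (by nlinarith [sq_nonneg ε]))

/-- The correction for the pending advice of batch `u`, which the learner has already seen
but not yet used. -/
noncomputable def pendingFactor (ε : ℝ) (u : Fin k) (m : ℕ) (v v' : Fin n) :
    List (RObs k n) → ℝ
  | [] => 1
  | o :: h => if pulls u (o :: h) < m ∧ armBatch o.2.1 ≠ some u then
      1 + 4 * ε ^ 2 * agreement v v' (o.1 u) else 1

lemma pendingFactor_of_le (ε : ℝ) (u : Fin k) (m : ℕ) (v v' : Fin n) (h : List (RObs k n))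
    (hm : m ≤ pulls u h) : pendingFactor ε u m v v' h = 1 := by
  cases h with
  | nil => rfl
  | cons o h => simp [pendingFactor, Nat.not_lt.2 hm]

lemma sum_batchAdvice_agreement (ε : ℝ) (u : Fin k) (m : ℕ) {v v' : Fin n} (hv : v ≠ v')
    (h : List (RObs k n)) (hm : pulls u h < m) :
    ∑ a, batchAdvice h u a * (1 + 4 * ε ^ 2 * agreement v v' a)
      = pendingFactor ε u m v v' h := by
  have hu : ∑ a : Fin n → Bool, (1 / 2 : ℝ) ^ n * (1 + 4 * ε ^ 2 * agreement v v' a) = 1 := by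
    rw [← Finset.mul_sum, Finset.sum_add_distrib, ← Finset.mul_sum, sum_uniform_agreement hv,
      mul_zero, add_zero, Finset.mul_sum]
    simp
  rcases h with _ | ⟨o, h⟩
  · exact hu
  · by_cases ho : armBatch o.2.1 = some u
    · simp only [batchAdvice, pendingFactor, ho, if_true]
      simpa using hu
    · simp [batchAdvice, pendingFactor, ho, hm]

lemma neg_one_le_agreement (v v' : Fin n) (a : Fin n → Bool) : -1 ≤ agreement v v' a := by
  unfold agreement; split_ifs <;> norm_num

lemma stoppedLik_nonneg {ε : ℝ} (h0 : 0 ≤ ε) (h1 : ε ≤ 1 / 2) (u : Fin k) (m : ℕ) (v : Fin n)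
    (h : List (RObs k n)) : 0 ≤ stoppedLik ε u m v h := by
  induction h with
  | nil => simp [stoppedLik]
  | cons o h ih =>
    rcases o with ⟨A, _ | ⟨u', i⟩, b⟩ <;> simp only [stoppedLik, roundLik] <;>
      split_ifs <;> first | exact ih | exact mul_nonneg (by linarith) ih

lemma obsExpect_stoppedLik_mul_le {ε : ℝ} (h0 : 0 ≤ ε) (h1 : ε ≤ 1 / 10) (u : Fin k) (m : ℕ)
    {v v' : Fin n} (hv : v ≠ v') {L : RLearner k n} (hL : IsRLearner L) (T : ℕ) :
    obsExpect ε none L T (fun h => stoppedLik ε u m v h * stoppedLik ε u m v' h)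
      ≤ 25 / 24 := by
  let Φ : List (RObs k n) → ℝ := fun h =>
    stoppedLik ε u m v h * stoppedLik ε u m v' h * pendingFactor ε u m v v' h
  have hΦ : obsExpect ε none L T Φ = Φ [] := by
    refine obsExpect_of_fixed T fun h => ?_
    by_cases hm : pulls u h < m
    · rw [obsStep_eq_of_advice ε none hL u h (fun a =>
        stoppedLik ε u m v h * stoppedLik ε u m v' h * (1 + 4 * ε ^ 2 * agreement v v' a))]
      · simp only [mul_left_comm _ (stoppedLik ε u m v h * stoppedLik ε u m v' h)]
        rw [← Finset.mul_sum, sum_batchAdvice_agreement ε u m hv h hm]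
      · intro A I
        have e := sum_roundLik_mul ε u v v' A I
        have e2 : ∀ b, pendingFactor ε u m v v' ((A, I, b) :: h)
            = if armBatch I = some u then 1 else 1 + 4 * ε ^ 2 * agreement v v' (A u) := by
          intro b
          by_cases hI : armBatch I = some u <;> simp [pendingFactor, pulls, hI, hm]
        simp only [Φ, stoppedLik, hm, if_true, e2]
        calc _ = (∑ b, armLossDensity ε none A I b *
              (roundLik ε u v (A, I, b) * roundLik ε u v' (A, I, b))) *
                (stoppedLik ε u m v h * stoppedLik ε u m v' h *
                  if armBatch I = some u then 1
                  else 1 + 4 * ε ^ 2 * agreement v v' (A u)) := by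
              rw [Finset.sum_mul]
              exact Finset.sum_congr rfl fun b _ => by ring
          _ = _ := by
            rw [e]
            split_ifs <;> ring
    · refine obsStep_eq_of_const ε none hL h _ fun A I => ?_
      have e2 : ∀ b, pendingFactor ε u m v v' ((A, I, b) :: h) = 1 := fun b =>
        pendingFactor_of_le ε u m v v' _ (by
          unfold pulls
          split_ifs <;> omega)
      simp only [Φ, stoppedLik, hm, if_false, e2,
        pendingFactor_of_le ε u m v v' h (by omega)]
      rw [← Finset.sum_mul, sum_armLossDensity, one_mul]
  have e : Φ [] = 1 := by simp [Φ, stoppedLik, pendingFactor]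
  have hp : ∀ h : List (RObs k n), 24 / 25 ≤ pendingFactor ε u m v v' h := by
    intro h
    rcases h with _ | ⟨o, h⟩ <;> simp only [pendingFactor]
    · norm_num
    · split_ifs
      · have := neg_one_le_agreement v v' (o.1 u)
        nlinarith [sq_nonneg ε]
      · norm_num
  have h3 : obsExpect ε none L T (fun h => stoppedLik ε u m v h * stoppedLik ε u m v' h)
      ≤ obsExpect ε none L T ((25 / 24 : ℝ) • Φ) := by
    refine obsExpect_mono h0 (by linarith) none hL T fun h _ => ?_
    have a := stoppedLik_nonneg h0 (by linarith) u m v h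
    have b := stoppedLik_nonneg h0 (by linarith) u m v' h
    simp only [Pi.smul_apply, smul_eq_mul, Φ]
    nlinarith [mul_le_mul_of_nonneg_left (hp h) (mul_nonneg a b)]
  rw [map_smul, hΦ, e] at h3
  simpa using h3

/-- Averaged over the experts of batch `u`, the probability of at least `m` pulls of that
batch is controlled by the same probability under `S_0` and a second moment. -/
lemma sum_obsExpect_manyPulls_le {ε : ℝ} (h0 : 0 ≤ ε) (h1 : ε ≤ 1 / 10) (hn : 0 < n)
    (u : Fin k) (m : ℕ) (hm : (1 + 4 * ε ^ 2) ^ m ≤ (n : ℝ) / 10) {L : RLearner k n}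
    (hL : IsRLearner L) (T : ℕ) :
    ∑ v : Fin n, obsExpect ε (some (u, v)) L T (manyPulls u m)
      ≤ n * (obsExpect ε none L T (manyPulls u m) + 3 / 10) := by
  have hn' : (0 : ℝ) < n := by exact_mod_cast hn
  have hsq : ∑ v : Fin n, ∑ v' : Fin n,
      obsExpect ε none L T (fun h => stoppedLik ε u m v h * stoppedLik ε u m v' h)
      ≤ (n : ℝ) ^ 2 * (12 / 10) := by
    calc _ ≤ ∑ v : Fin n, ∑ v' : Fin n, ((if v = v' then (n : ℝ) / 10 else 0) + 25 / 24) := by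
          refine Finset.sum_le_sum fun v _ => Finset.sum_le_sum fun v' _ => ?_
          split_ifs with hv
          · subst hv
            have := obsExpect_stoppedLik_sq_le h0 (by linarith) u m v hL T
            linarith
          · have := obsExpect_stoppedLik_mul_le h0 h1 u m hv hL T
            linarith
      _ = (n : ℝ) ^ 2 * (1 / 10 + 25 / 24) := by
          simp [Finset.sum_add_distrib]; ring
      _ ≤ _ := by gcongr; norm_num
  have e : (fun h : List (RObs k n) => (∑ v : Fin n, stoppedLik ε u m v h) ^ 2)
      = ∑ v : Fin n, ∑ v' : Fin n, fun h => stoppedLik ε u m v h * stoppedLik ε u m v' h := by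
    funext h
    simp only [Finset.sum_apply, sq, Finset.sum_mul_sum]
  simp only [obsExpect_manyPulls ε u m _ hL]
  rw [← map_sum]
  calc _ ≤ obsExpect ε none L T ((n : ℝ) • manyPulls u m +
        (1 / (4 * n) : ℝ) • fun h => (∑ v : Fin n, stoppedLik ε u m v h) ^ 2) := by
        refine obsExpect_mono h0 (by linarith) none hL T fun h _ => ?_
        simp only [Finset.sum_apply, Pi.add_apply, Pi.smul_apply, smul_eq_mul,
          ← Finset.sum_mul]
        set z := ∑ v : Fin n, stoppedLik ε u m v h
        have hz : (1 / (4 * n) : ℝ) * z ^ 2 + n - z = (z - 2 * n) ^ 2 / (4 * n) := by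
          field_simp; ring
        have hz' : 0 ≤ (z - 2 * n) ^ 2 / (4 * n) := by positivity
        have hz2 : 0 ≤ (1 / (4 * n) : ℝ) * z ^ 2 := by positivity
        unfold manyPulls
        split_ifs <;> linarith
    _ ≤ _ := by
        rw [map_add, map_smul, map_smul, e]
        simp only [map_sum, smul_eq_mul]
        have : (1 / (4 * n) : ℝ) * ((n : ℝ) ^ 2 * (12 / 10)) = n * (3 / 10) := by
          field_simp; ring
        have h4 := mul_le_mul_of_nonneg_left hsq (by positivity : 0 ≤ (1 / (4 * n) : ℝ))
        linarith

/-! ### Regret bounds -/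

lemma sum_map_pulls (h : List (RObs k n)) (c : ℝ) :
    (h.map fun o => ∑ u : Fin k, if armBatch o.2.1 = some u then c else 0).sum
      = c * ∑ u : Fin k, (pulls u h : ℝ) := by
  induction h with
  | nil => simp [pulls]
  | cons o h ih =>
    rw [List.map_cons, List.sum_cons, ih, Finset.mul_sum, Finset.mul_sum,
      ← Finset.sum_add_distrib]
    refine Finset.sum_congr rfl fun u _ => ?_
    simp only [pulls]
    split_ifs <;> push_cast <;> ring

lemma sum_map_not_pulls (u : Fin k) (h : List (RObs k n)) (c : ℝ) :
    (h.map fun o => if armBatch o.2.1 = some u then 0 else c).sum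
      = c * (h.length - pulls u h) := by
  induction h with
  | nil => simp [pulls]
  | cons o h ih =>
    rw [List.map_cons, List.sum_cons, ih]
    simp only [pulls, List.length_cons]
    split_ifs <;> push_cast <;> ring

/-- Under `S_0` every pull outside arm `0` costs `ε / 2`. -/
lemma le_pseudoRegret_none {ε : ℝ} (h0 : 0 ≤ ε) (h1 : ε ≤ 1 / 2) {L : RLearner k n}
    (hL : IsRLearner L) (T : ℕ) :
    ε / 2 * ∑ u : Fin k, obsExpect ε none L T (fun h => (pulls u h : ℝ))
      ≤ pseudoRegret ε none L T := by
  have h := le_pseudoRegret h0 h1 none hL none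
    (fun I => ∑ u : Fin k, if armBatch I = some u then ε / 2 else 0) (by
      intro A I
      rcases I with _ | ⟨u', i⟩
      · simp [armBatch, expertArm, armLossDensity]
      · simp [armBatch, expertArm, armLossDensity, batchFactor]) T
  have e : (fun h : List (RObs k n) => (h.map fun o =>
      ∑ u : Fin k, if armBatch o.2.1 = some u then ε / 2 else 0).sum)
      = (ε / 2) • ∑ u : Fin k, fun h => (pulls u h : ℝ) := by
    funext h
    simp [sum_map_pulls]
  rwa [e, map_smul, map_sum, smul_eq_mul] at h

/-- Under `S_{(u,v)}` every pull outside batch `u` costs at least `ε / 2`. -/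
lemma le_pseudoRegret_some {ε : ℝ} (h0 : 0 ≤ ε) (h1 : ε ≤ 1 / 2) (u : Fin k) (v : Fin n)
    (m T : ℕ) (hm : ∀ p : ℕ, p < m → (p : ℝ) ≤ T / 2) {L : RLearner k n}
    (hL : IsRLearner L) :
    ε * T / 4 * (1 - obsExpect ε (some (u, v)) L T (manyPulls u m))
      ≤ pseudoRegret ε (some (u, v)) L T := by
  refine le_trans ?_ (le_pseudoRegret h0 h1 (some (u, v)) hL (some (u, v))
    (fun I => if armBatch I = some u then 0 else ε / 2) (by
      intro A I
      have e : armLossDensity ε (some (u, v)) A (expertArm A (some (u, v))) true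
          = 1 / 2 - ε := by
        simp [expertArm, armLossDensity, batchFactor]
      rw [e]
      rcases I with _ | ⟨u', i⟩
      · simp [armBatch, armLossDensity]; linarith
      · by_cases hu : u' = u
        · subst hu
          simp only [armBatch, armLossDensity, batchFactor, Option.map_some, if_true]
          split_ifs <;> linarith
        · simp [armBatch, armLossDensity, batchFactor, hu]; linarith) T)
  have hc := obsExpect_const ε (some (u, v)) hL T (ε * T / 4)
  have e : ε * T / 4 * (1 - obsExpect ε (some (u, v)) L T (manyPulls u m))
      = obsExpect ε (some (u, v)) L T ((fun _ => ε * T / 4) - (ε * T / 4) • manyPulls u m) := by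
    rw [map_sub, map_smul, hc, smul_eq_mul]; ring
  rw [e]
  refine obsExpect_mono h0 h1 _ hL T fun h hh => ?_
  rw [sum_map_not_pulls, hh]
  simp only [Pi.sub_apply, Pi.smul_apply, smul_eq_mul, manyPulls]
  have hle : pulls u h ≤ h.length := by
    clear hh
    induction h with
    | nil => simp [pulls]
    | cons o h ih =>
      simp only [pulls, List.length_cons]
      split_ifs <;> omega
  have hle' : (pulls u h : ℝ) ≤ T := by rw [← hh]; exact_mod_cast hle
  split_ifs with hp
  · nlinarith
  · nlinarith [hm _ (not_le.1 hp)]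

/-- Markov's inequality for the number of pulls. -/
lemma mul_obsExpect_manyPulls_le {ε : ℝ} (h0 : 0 ≤ ε) (h1 : ε ≤ 1 / 2) (s : RStrategy k n)
    (u : Fin k) (m T : ℕ) {L : RLearner k n} (hL : IsRLearner L) :
    m * obsExpect ε s L T (manyPulls u m) ≤ obsExpect ε s L T fun h => (pulls u h : ℝ) := by
  rw [← smul_eq_mul, ← map_smul]
  refine obsExpect_mono h0 h1 s hL T fun h _ => ?_
  simp only [Pi.smul_apply, smul_eq_mul, manyPulls]
  split_ifs with hp
  · simpa using hp
  · simp

/-- Some strategy forces regret of order `ε T` as long as `T / (2k) + 1` samples do not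
suffice to identify one of `n` experts at bias `ε`. -/
lemma exists_lt_pseudoRegret {ε : ℝ} (h0 : 0 < ε) (h1 : ε ≤ 1 / 10) {T : ℕ} (hk : 0 < k)
    (hn : 0 < n) (hT : 0 < T)
    (hm : (1 + 4 * ε ^ 2) ^ ⌈(T : ℝ) / (2 * k)⌉₊ ≤ (n : ℝ) / 10)
    {L : RLearner k n} (hL : IsRLearner L) :
    ∃ s : RStrategy k n, ε * T / 10000 < pseudoRegret ε s L T := by
  have hT' : (0 : ℝ) < T := by exact_mod_cast hT
  have hn' : (0 : ℝ) < n := by exact_mod_cast hn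
  have hk' : (1 : ℝ) ≤ k := by exact_mod_cast hk
  have h1' : ε ≤ 1 / 2 := by linarith
  by_contra! hR
  have hA := (le_pseudoRegret_none h0.le h1' hL T).trans (hR none)
  have hA' : ∑ u : Fin k, obsExpect ε none L T (fun h => (pulls u h : ℝ)) ≤ T / 5000 := by
    refine le_of_mul_le_mul_left (a := ε / 2) ?_ (by positivity)
    linarith
  have : Nonempty (Fin k) := ⟨⟨0, hk⟩⟩
  obtain ⟨u, -, hu⟩ := Finset.exists_le_of_sum_le (s := (Finset.univ : Finset (Fin k)))
    (f := fun u => obsExpect ε none L T (fun h => (pulls u h : ℝ)))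
    (g := fun _ => (T : ℝ) / (2 * k) / 2500) Finset.univ_nonempty (by
      refine hA'.trans_eq ?_
      simp only [Finset.sum_const, Finset.card_univ, Fintype.card_fin, nsmul_eq_mul]
      field_simp
      norm_num)
  set m := ⌈(T : ℝ) / (2 * k)⌉₊ with hmdef
  have hmT : (T : ℝ) / (2 * k) ≤ m := Nat.le_ceil _
  have hq : (0 : ℝ) < T / (2 * k) := by positivity
  have hP0 : obsExpect ε none L T (manyPulls u m) ≤ 1 / 2500 := by
    have hM := mul_obsExpect_manyPulls_le h0.le h1' none u m T hL
    have hm0 : (0 : ℝ) < m := hq.trans_le hmT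
    refine le_of_mul_le_mul_left (hM.trans (hu.trans ?_)) hm0
    linarith
  have hB := sum_obsExpect_manyPulls_le h0.le h1 hn u m hm hL T
  have hlt : ∀ p : ℕ, p < m → (p : ℝ) ≤ T / 2 := by
    intro p hp
    refine (Nat.lt_ceil.1 hp).le.trans ?_
    gcongr
    linarith
  have hC : ∑ v : Fin n, ε * T / 4 * (1 - obsExpect ε (some (u, v)) L T (manyPulls u m))
      ≤ ∑ _v : Fin n, ε * T / 10000 :=
    Finset.sum_le_sum fun v _ =>
      (le_pseudoRegret_some h0.le h1' u v m T hlt hL).trans (hR (some (u, v)))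
  rw [← Finset.mul_sum, Finset.sum_sub_distrib] at hC
  simp only [Finset.sum_const, Finset.card_univ, Fintype.card_fin, nsmul_eq_mul,
    mul_one] at hC
  have hD : (n : ℝ) / 2 ≤ n - ∑ v : Fin n, obsExpect ε (some (u, v)) L T (manyPulls u m) := by
    nlinarith
  have hεT : 0 < ε * T := by positivity
  have := mul_le_mul_of_nonneg_left hD (by positivity : 0 ≤ ε * T / 4)
  nlinarith [mul_pos hn' hεT]

end ReducedBwE

/-- in the reduced setting with `k ≥ 1`, `n > 10`, `T ≥ k·ln(n/10)` and
`ε = √(k·ln(n/10)/(100T))`, every learner suffers pseudo-regret greater than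
`√(T·k·ln(n/10))/100000` against some strategy in the pool. -/
theorem stmt1 (k n T : ℕ) (hk : 1 ≤ k) (hn : 10 < n)
    (hT : (k : ℝ) * Real.log ((n : ℝ) / 10) ≤ (T : ℝ))
    (L : RLearner k n) (hL : IsRLearner L) :
    ∃ s : RStrategy k n,
      Real.sqrt ((T : ℝ) * (k : ℝ) * Real.log ((n : ℝ) / 10)) / 100000
        < pseudoRegret (Real.sqrt ((k : ℝ) * Real.log ((n : ℝ) / 10) / (100 * (T : ℝ))))
            s L T := by
  have hk' : (1 : ℝ) ≤ k := by exact_mod_cast hk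
  have hn' : (11 : ℝ) ≤ n := by exact_mod_cast hn
  have hlog : 1 / 11 ≤ Real.log ((n : ℝ) / 10) := by
    refine le_trans ?_ (Real.one_sub_inv_le_log_of_pos (by positivity))
    rw [inv_div, div_le_iff₀ (by norm_num), sub_mul, div_mul_eq_mul_div]
    have : (10 : ℝ) * 11 / n ≤ 10 := by
      rw [div_le_iff₀ (by positivity)]; linarith
    linarith
  set ℓ := Real.log ((n : ℝ) / 10) with hℓ
  have hkl : 0 < (k : ℝ) * ℓ := by positivity
  have hT' : (0 : ℝ) < T := hkl.trans_le hT
  set ε := Real.sqrt ((k : ℝ) * ℓ / (100 * (T : ℝ))) with hε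
  have hεpos : 0 < ε := Real.sqrt_pos.2 (by positivity)
  have hεsq : ε ^ 2 = k * ℓ / (100 * T) := Real.sq_sqrt (by positivity)
  have hεle : ε ≤ 1 / 10 := by
    rw [hε]
    refine Real.sqrt_le_iff.2 ⟨by norm_num, ?_⟩
    rw [div_le_iff₀ (by positivity)]
    linarith
  have hsqrt : Real.sqrt ((T : ℝ) * k * ℓ) = 10 * T * ε := by
    rw [Real.sqrt_eq_iff_mul_self_eq_of_pos (by positivity)]
    have : 10 * (T : ℝ) * ε * (10 * T * ε) = 100 * T ^ 2 * ε ^ 2 := by ring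
    rw [this, hεsq]
    field_simp
  have hm : (1 + 4 * ε ^ 2) ^ ⌈(T : ℝ) / (2 * k)⌉₊ ≤ (n : ℝ) / 10 := by
    have hceil : (⌈(T : ℝ) / (2 * k)⌉₊ : ℝ) ≤ 25 * T / k := by
      refine (Nat.ceil_lt_add_one (by positivity)).le.trans ?_
      have : (1 : ℝ) ≤ 11 * T / k := by
        rw [le_div_iff₀ (by positivity)]
        nlinarith
      have e : (25 : ℝ) * T / k = T / (2 * k) + 11 * T / k + 27 / 2 * (T / k) := by
        field_simp
        norm_num
      have : (0 : ℝ) ≤ 27 / 2 * (T / k) := by positivity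
      linarith
    calc (1 + 4 * ε ^ 2) ^ ⌈(T : ℝ) / (2 * k)⌉₊
        ≤ Real.exp (4 * ε ^ 2) ^ ⌈(T : ℝ) / (2 * k)⌉₊ := by
          gcongr
          linarith [Real.add_one_le_exp (4 * ε ^ 2)]
      _ = Real.exp (⌈(T : ℝ) / (2 * k)⌉₊ * (4 * ε ^ 2)) := by rw [Real.exp_nat_mul]
      _ ≤ Real.exp ℓ := by
          refine Real.exp_le_exp.2 ?_
          calc _ ≤ 25 * T / k * (4 * ε ^ 2) := by gcongr
            _ = ℓ := by rw [hεsq]; field_simp; norm_num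
      _ = (n : ℝ) / 10 := Real.exp_log (by positivity)
  obtain ⟨s, hs⟩ := ReducedBwE.exists_lt_pseudoRegret hεpos hεle (by omega) (by omega)
    (by exact_mod_cast hT') hm hL
  refine ⟨s, ?_⟩
  rw [hsqrt]
  linarith
end

section
/- In the reduced BwE setting with parameters k ≥ 1, n ≥ 10, and 0 < ε ≤ 0.1, every good SBI algorithm A' satisfies T(A', S_0) ≥ k·ln(n/10) / (20ε²). -/
open scoped BigOperators ENNReal

/-! ## Special Batch Identification (SBI) algorithms -/

/-- An SBI algorithm: at the start of each round, given its observed history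
(most recent first), it randomly either halts and outputs a batch in
`{0} ∪ [k]` (`decide h (some b)`), or continues (`decide h none`); if it continues,
it receives the round's advice and pulls an arm according to the density `pull`. -/
structure RSBI (k n : ℕ) where
  decide : List (RObs k n) → Option (Option (Fin k)) → ℝ
  pull : List (RObs k n) → RAdviceM k n → RArm k → ℝ

/-- The decision and pulling densities are probability distributions. -/
def IsRSBI {k n : ℕ} (B : RSBI k n) : Prop :=
  (∀ h, (∀ d, 0 ≤ B.decide h d) ∧ ∑ d : Option (Option (Fin k)), B.decide h d = 1) ∧
  (∀ h A, (∀ i, 0 ≤ B.pull h A i) ∧ ∑ i : RArm k, B.pull h A i = 1)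

/-- The full observed history of a completed `t`-round trajectory, most recent first. -/
def fullObsHist {k n t : ℕ} (g : Fin t → RRecord k n) : List (RObs k n) :=
  (List.ofFn g).reverse.map obsOf

/-- Probability that the SBI algorithm completes (at least) `t` rounds, realizing the
trajectory `g`: at each of these rounds it decides to continue, the adversary plays
strategy `s`, and the algorithm pulls the recorded arm. -/
noncomputable def runProb {k n : ℕ} (ε : ℝ) (s : RStrategy k n) (B : RSBI k n) (t : ℕ)
    (g : Fin t → RRecord k n) : ℝ :=
  ∏ i : Fin t,
    B.decide (obsHist g i) none *
      (stratDensity ε s (histUpTo g i) (g i).1 (g i).2.1 *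
        B.pull (obsHist g i) (g i).1 (g i).2.2)

/-- Probability that the SBI algorithm halts after exactly `t` rounds with output `b`. -/
noncomputable def haltProb {k n : ℕ} (ε : ℝ) (s : RStrategy k n) (B : RSBI k n) (t : ℕ)
    (b : Option (Fin k)) : ℝ :=
  ∑ g : Fin t → RRecord k n, runProb ε s B t g * B.decide (fullObsHist g) (some b)

/-- Probability that the SBI algorithm (eventually) halts with output `b`. -/
noncomputable def outProb {k n : ℕ} (ε : ℝ) (s : RStrategy k n) (B : RSBI k n)
    (b : Option (Fin k)) : ℝ≥0∞ :=
  ∑' t : ℕ, ENNReal.ofReal (haltProb ε s B t b)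

/-- Probability that the SBI algorithm runs for at least `t` rounds. -/
noncomputable def surviveProb {k n : ℕ} (ε : ℝ) (s : RStrategy k n) (B : RSBI k n)
    (t : ℕ) : ℝ :=
  ∑ g : Fin t → RRecord k n, runProb ε s B t g

/-- `T(A', S)`: the expected number of rounds the SBI algorithm runs before halting,
via the layer-cake formula `E[T] = Σ_{t ≥ 1} Pr[T ≥ t]` (it is `∞` if the algorithm
may run forever with positive probability). -/
noncomputable def expRounds {k n : ℕ} (ε : ℝ) (s : RStrategy k n) (B : RSBI k n) : ℝ≥0∞ :=
  ∑' t : ℕ, ENNReal.ofReal (surviveProb ε s B (t + 1))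

/-- An SBI algorithm is good if, under every strategy of the pool, it outputs the
special batch of that strategy with probability at least `0.95`. -/
def GoodSBI {k n : ℕ} (ε : ℝ) (B : RSBI k n) : Prop :=
  ∀ s : RStrategy k n, ENNReal.ofReal 0.95 ≤ outProb ε s B (specialBatch s)

namespace BwE

/-! ### Sums over product spaces -/

lemma sum_pi_prod_eq_one {ι κ : Type*} [Fintype ι] [DecidableEq ι] [Fintype κ]
    (γ : ι → κ → ℝ) (hγ : ∀ w, ∑ a, γ w a = 1) :
    ∑ A : ι → κ, ∏ w, γ w (A w) = 1 := by
  rw [← Fintype.prod_sum]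
  simp [hγ]

lemma sum_pi_prod_mul_eval {ι κ : Type*} [Fintype ι] [DecidableEq ι] [Fintype κ]
    (γ : ι → κ → ℝ) (hγ : ∀ w, ∑ a, γ w a = 1) (u : ι) (G : κ → ℝ) :
    ∑ A : ι → κ, (∏ w, γ w (A w)) * G (A u) = ∑ a, γ u a * G a := by
  have hfold : ∀ A : ι → κ, (∏ w, γ w (A w)) * G (A u) =
      ∏ w, (γ w (A w) * if w = u then G (A w) else 1) := by
    intro A
    rw [Finset.prod_mul_distrib, Finset.prod_ite_eq' Finset.univ u (fun w => G (A w))]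
    simp
  simp only [hfold]
  rw [← Fintype.prod_sum (fun w a => γ w a * if w = u then G a else 1)]
  rw [Finset.prod_eq_single u]
  · simp
  · intro w _ hw
    simp [hw, hγ]
  · simp

/-! ### The interaction seen through the learner's observations -/

variable {k n : ℕ}

/-- Density of the next advice vector of batch `u` given the observed history. -/
noncomputable def advFactor (h : List (RObs k n)) (u : Fin k) (a : Fin n → Bool) : ℝ :=
  match h with
  | [] => (1 / 2 : ℝ) ^ n
  | o :: _ => if armBatch o.2.1 = some u then (1 / 2 : ℝ) ^ n else if a = o.1 u then 1 else 0

/-- Probability that batch `u` has correct arm `(u, c)`. -/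
noncomputable def correctProb (ε : ℝ) (s : RStrategy k n) (A : RAdviceM k n) (u : Fin k)
    (c : Bool) : ℝ :=
  batchFactor ε s A (fun _ => c) u

/-- Probability of observing loss `l` when pulling a given arm. -/
noncomputable def obsLoss (ε : ℝ) (s : RStrategy k n) (A : RAdviceM k n) :
    RArm k → Bool → ℝ
  | none, l => if l then 1 / 2 - ε / 2 else 1 / 2 + ε / 2
  | some (u, i), l => correctProb ε s A u (i ^^ l)

/-- One round of the interaction, acting backwards on functions of the observed history. -/
noncomputable def step (ε : ℝ) (s : RStrategy k n) (B : RSBI k n) (F : List (RObs k n) → ℝ)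
    (h : List (RObs k n)) : ℝ :=
  B.decide h none * ∑ A : RAdviceM k n, (∏ u, advFactor h u (A u)) *
    ∑ i : RArm k, B.pull h A i * ∑ l : Bool, obsLoss ε s A i l * F ((A, i, l) :: h)

/-- Expectation of a function of the observed history on the event that the algorithm
completes `t` rounds. -/
noncomputable def runExp (ε : ℝ) (s : RStrategy k n) (B : RSBI k n) (t : ℕ)
    (F : List (RObs k n) → ℝ) : ℝ :=
  ∑ g : Fin t → RRecord k n, runProb ε s B t g * F (fullObsHist g)

lemma sum_advFactor (h : List (RObs k n)) (u : Fin k) : ∑ a, advFactor h u a = 1 := by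
  cases h with
  | nil => simp [advFactor]
  | cons o h =>
    unfold advFactor
    by_cases ho : armBatch o.2.1 = some u
    · simp [ho]
    · simp [ho]

lemma advFactor_nonneg (h : List (RObs k n)) (u : Fin k) (a : Fin n → Bool) :
    0 ≤ advFactor h u a := by
  unfold advFactor
  split
  · positivity
  · split_ifs <;> positivity

lemma adviceDensity_eq (hist : List (RRecord k n)) (A : RAdviceM k n) :
    adviceDensity hist A = ∏ u, advFactor (hist.map obsOf) u (A u) := by
  cases hist with
  | nil => simp [adviceDensity, advFactor, mul_comm k n, pow_mul]
  | cons r hist => simp [adviceDensity, advFactor, obsOf]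

lemma sum_correctProb (ε : ℝ) (s : RStrategy k n) (A : RAdviceM k n) (u : Fin k) :
    ∑ c, correctProb ε s A u c = 1 := by
  unfold correctProb batchFactor
  rcases s with _ | ⟨u', v'⟩
  · norm_num
  · by_cases h : u = u'
    · cases hA : A u v' <;> simp [h] <;> subst h <;> simp [hA] <;> norm_num
    · simp [h]

lemma correctProb_nonneg {ε : ℝ} (hε : 0 < ε) (hε' : ε ≤ 0.1) (s : RStrategy k n)
    (A : RAdviceM k n) (u : Fin k) (c : Bool) : 0 ≤ correctProb ε s A u c := by
  unfold correctProb batchFactor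
  rcases s with _ | ⟨u', v'⟩
  · norm_num
  · norm_num at hε'
    dsimp only
    split_ifs <;> linarith

lemma lossDensity_eq (ε : ℝ) (s : RStrategy k n) (A : RAdviceM k n) (L : RLossState k) :
    lossDensity ε s A L = (if L.2 then 1 / 2 - ε / 2 else 1 / 2 + ε / 2) *
      ∏ u, correctProb ε s A u (L.1 u) := by
  unfold lossDensity correctProb
  congr 1

lemma sum_lossDensity_mul (ε : ℝ) (s : RStrategy k n) (A : RAdviceM k n) (i : RArm k)
    (φ : Bool → ℝ) :
    ∑ L : RLossState k, lossDensity ε s A L * φ (armLoss L i) =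
      ∑ l, obsLoss ε s A i l * φ l := by
  simp only [lossDensity_eq]
  rw [Fintype.sum_prod_type_right]
  rcases i with _ | ⟨u, i⟩
  · refine Finset.sum_congr rfl fun b _ => ?_
    have hc : ∀ c : Fin k → Bool,
        (if b then 1 / 2 - ε / 2 else 1 / 2 + ε / 2) * (∏ w, correctProb ε s A w (c w)) *
          φ (armLoss (c, b) none) =
        (if b then 1 / 2 - ε / 2 else 1 / 2 + ε / 2) * φ b *
          ∏ w, correctProb ε s A w (c w) := fun c => by
      simp only [armLoss]
      ring
    simp only [hc, obsLoss]
    rw [← Finset.mul_sum, sum_pi_prod_eq_one _ (sum_correctProb ε s A), mul_one]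
  · have hb : ∀ b : Bool, ∑ c : Fin k → Bool,
        (if b then 1 / 2 - ε / 2 else 1 / 2 + ε / 2) * (∏ w, correctProb ε s A w (c w)) *
          φ (armLoss (c, b) (some (u, i))) =
        (if b then 1 / 2 - ε / 2 else 1 / 2 + ε / 2) *
          ∑ c, correctProb ε s A u c * φ (if i = c then false else true) := by
      intro b
      rw [← sum_pi_prod_mul_eval _ (sum_correctProb ε s A) u
        (fun c => φ (if i = c then false else true)), Finset.mul_sum]
      exact Finset.sum_congr rfl fun c _ => by simp [armLoss, mul_assoc]
    simp only [hb]
    cases i <;> simp [obsLoss] <;> ring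

lemma obsLoss_nonneg {ε : ℝ} (hε : 0 < ε) (hε' : ε ≤ 0.1) (s : RStrategy k n)
    (A : RAdviceM k n) (i : RArm k) (l : Bool) : 0 ≤ obsLoss ε s A i l := by
  rcases i with _ | ⟨u, i⟩
  · norm_num at hε'
    cases l <;> simp [obsLoss] <;> linarith
  · exact correctProb_nonneg hε hε' s A u _

lemma sum_obsLoss (ε : ℝ) (s : RStrategy k n) (A : RAdviceM k n) (i : RArm k) :
    ∑ l, obsLoss ε s A i l = 1 := by
  rcases i with _ | ⟨u, i⟩
  · simp [obsLoss]; ring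
  · have := sum_correctProb ε s A u
    cases i <;> simp [obsLoss] at this ⊢ <;> linarith

/-! ### The expectation functional -/

lemma runExp_zero (ε : ℝ) (s : RStrategy k n) (B : RSBI k n) (F : List (RObs k n) → ℝ) :
    runExp ε s B 0 F = F [] := by
  simp [runExp, runProb, fullObsHist]

lemma ofFn_snoc {α : Type*} {t : ℕ} (g : Fin t → α) (r : α) :
    List.ofFn (Fin.snoc g r : Fin (t + 1) → α) = List.ofFn g ++ [r] := by
  rw [List.ofFn_succ']
  simp

lemma histUpTo_snoc {t : ℕ} (g : Fin t → RRecord k n) (r : RRecord k n) (i : ℕ) (hi : i ≤ t) :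
    histUpTo (Fin.snoc g r : Fin (t + 1) → RRecord k n) i = histUpTo g i := by
  unfold histUpTo
  rw [ofFn_snoc, List.take_append_of_le_length (by simpa using hi)]

lemma histUpTo_self {t : ℕ} (g : Fin t → RRecord k n) :
    histUpTo g t = (List.ofFn g).reverse := by
  unfold histUpTo
  rw [List.take_of_length_le (by simp)]

lemma runProb_snoc (ε : ℝ) (s : RStrategy k n) (B : RSBI k n) {t : ℕ}
    (g : Fin t → RRecord k n) (r : RRecord k n) :
    runProb ε s B (t + 1) (Fin.snoc g r) = runProb ε s B t g *
      (B.decide (fullObsHist g) none *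
        ((∏ u, advFactor (fullObsHist g) u (r.1 u)) * lossDensity ε s r.1 r.2.1 *
          B.pull (fullObsHist g) r.1 r.2.2)) := by
  unfold runProb
  rw [Fin.prod_univ_castSucc]
  have hlast : obsHist (Fin.snoc g r : Fin (t + 1) → RRecord k n) t = fullObsHist g := by
    unfold obsHist fullObsHist
    rw [histUpTo_snoc g r t le_rfl, histUpTo_self]
  congr 1
  · refine Finset.prod_congr rfl fun i _ => ?_
    have hi : (i : ℕ) ≤ t := i.2.le
    simp only [obsHist, Fin.val_castSucc, Fin.snoc_castSucc, histUpTo_snoc g r i hi]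
  · simp only [Fin.val_last, Fin.snoc_last, hlast, stratDensity,
      histUpTo_snoc g r t le_rfl, histUpTo_self, adviceDensity_eq]
    rfl

lemma fullObsHist_snoc {t : ℕ} (g : Fin t → RRecord k n) (r : RRecord k n) :
    fullObsHist (Fin.snoc g r : Fin (t + 1) → RRecord k n) = obsOf r :: fullObsHist g := by
  unfold fullObsHist
  rw [ofFn_snoc]
  simp

lemma runExp_succ (ε : ℝ) (s : RStrategy k n) (B : RSBI k n) (t : ℕ)
    (F : List (RObs k n) → ℝ) :
    runExp ε s B (t + 1) F = runExp ε s B t (step ε s B F) := by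
  unfold runExp
  rw [← (Fin.snocEquiv (fun _ : Fin (t + 1) => RRecord k n)).sum_comp,
    Fintype.sum_prod_type_right]
  refine Finset.sum_congr rfl fun g _ => ?_
  have hterm : ∀ r : RRecord k n,
      runProb ε s B (t + 1) (Fin.snocEquiv (fun _ : Fin (t + 1) => RRecord k n) (r, g)) *
        F (fullObsHist (Fin.snocEquiv (fun _ : Fin (t + 1) => RRecord k n) (r, g))) =
      runProb ε s B t g * (B.decide (fullObsHist g) none *
        ((∏ u, advFactor (fullObsHist g) u (r.1 u)) * (B.pull (fullObsHist g) r.1 r.2.2 *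
          (lossDensity ε s r.1 r.2.1 *
            F ((r.1, r.2.2, armLoss r.2.1 r.2.2) :: fullObsHist g))))) := by
    intro r
    change runProb ε s B (t + 1) (Fin.snoc g r) * F (fullObsHist (Fin.snoc g r)) = _
    rw [runProb_snoc, fullObsHist_snoc]
    simp only [obsOf]
    ring
  simp only [hterm]
  rw [← Finset.mul_sum, ← Finset.mul_sum, Fintype.sum_prod_type]
  unfold step
  congr 2
  refine Finset.sum_congr rfl fun A _ => ?_
  dsimp only
  rw [← Finset.mul_sum, Fintype.sum_prod_type_right]
  congr 1
  refine Finset.sum_congr rfl fun i _ => ?_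
  dsimp only
  rw [← Finset.mul_sum, sum_lossDensity_mul ε s A i
    (fun l => F ((A, i, l) :: fullObsHist g))]

lemma runExp_add (ε : ℝ) (s : RStrategy k n) (B : RSBI k n) (t : ℕ)
    (F G : List (RObs k n) → ℝ) :
    runExp ε s B t (fun h => F h + G h) = runExp ε s B t F + runExp ε s B t G := by
  simp [runExp, mul_add, Finset.sum_add_distrib]

lemma runExp_sub (ε : ℝ) (s : RStrategy k n) (B : RSBI k n) (t : ℕ)
    (F G : List (RObs k n) → ℝ) :
    runExp ε s B t (fun h => F h - G h) = runExp ε s B t F - runExp ε s B t G := by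
  simp [runExp, mul_sub, Finset.sum_sub_distrib]

lemma runExp_const_mul (ε : ℝ) (s : RStrategy k n) (B : RSBI k n) (t : ℕ) (c : ℝ)
    (F : List (RObs k n) → ℝ) :
    runExp ε s B t (fun h => c * F h) = c * runExp ε s B t F := by
  simp only [runExp, Finset.mul_sum]
  exact Finset.sum_congr rfl fun g _ => by ring

lemma runExp_sum {ι : Type*} (I : Finset ι) (ε : ℝ) (s : RStrategy k n) (B : RSBI k n) (t : ℕ)
    (F : ι → List (RObs k n) → ℝ) :
    runExp ε s B t (fun h => ∑ j ∈ I, F j h) = ∑ j ∈ I, runExp ε s B t (F j) := by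
  simp only [runExp, Finset.mul_sum]
  exact Finset.sum_comm

lemma runProb_nonneg {ε : ℝ} (hε : 0 < ε) (hε' : ε ≤ 0.1) (s : RStrategy k n) {B : RSBI k n}
    (hB : IsRSBI B) (t : ℕ) (g : Fin t → RRecord k n) : 0 ≤ runProb ε s B t g := by
  refine Finset.prod_nonneg fun i _ => mul_nonneg ((hB.1 _).1 _)
    (mul_nonneg (mul_nonneg ?_ ?_) ((hB.2 _ _).1 _))
  · rw [adviceDensity_eq]
    exact Finset.prod_nonneg fun u _ => advFactor_nonneg _ _ _
  · rw [lossDensity_eq]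
    refine mul_nonneg ?_ (Finset.prod_nonneg fun u _ => correctProb_nonneg hε hε' _ _ _ _)
    norm_num at hε'
    split_ifs <;> linarith

lemma runExp_mono {ε : ℝ} (hε : 0 < ε) (hε' : ε ≤ 0.1) (s : RStrategy k n) {B : RSBI k n}
    (hB : IsRSBI B) (t : ℕ) {F G : List (RObs k n) → ℝ} (hFG : ∀ h, F h ≤ G h) :
    runExp ε s B t F ≤ runExp ε s B t G :=
  Finset.sum_le_sum fun g _ =>
    mul_le_mul_of_nonneg_left (hFG _) (runProb_nonneg hε hε' s hB t g)

lemma runExp_nonneg {ε : ℝ} (hε : 0 < ε) (hε' : ε ≤ 0.1) (s : RStrategy k n) {B : RSBI k n}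
    (hB : IsRSBI B) (t : ℕ) {F : List (RObs k n) → ℝ} (hF : ∀ h, 0 ≤ F h) :
    0 ≤ runExp ε s B t F :=
  Finset.sum_nonneg fun g _ => mul_nonneg (runProb_nonneg hε hε' s hB t g) (hF _)

lemma step_const (ε : ℝ) (s : RStrategy k n) {B : RSBI k n} (hB : IsRSBI B) (c : ℝ)
    (h : List (RObs k n)) : step ε s B (fun _ => c) h = B.decide h none * c := by
  unfold step
  simp only [← Finset.sum_mul, sum_obsLoss, one_mul, (hB.2 _ _).2,
    sum_pi_prod_eq_one _ (sum_advFactor h)]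

lemma step_add (ε : ℝ) (s : RStrategy k n) (B : RSBI k n) (F G : List (RObs k n) → ℝ)
    (h : List (RObs k n)) :
    step ε s B (fun h => F h + G h) h = step ε s B F h + step ε s B G h := by
  simp only [step, mul_add, Finset.sum_add_distrib]

/-- A supermartingale bound: a potential that pays for `H` in each round bounds the total
expectation of `H`. -/
lemma sum_runExp_add_le {ε : ℝ} (hε : 0 < ε) (hε' : ε ≤ 0.1) (s : RStrategy k n) {B : RSBI k n}
    (hB : IsRSBI B) {H Φ : List (RObs k n) → ℝ} (hΦ : ∀ h, H h + step ε s B Φ h ≤ Φ h) (T : ℕ) :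
    ∑ t ∈ Finset.range T, runExp ε s B t H + runExp ε s B T Φ ≤ Φ [] := by
  induction T with
  | zero => simp [runExp_zero]
  | succ T ih =>
    have := runExp_mono hε hε' s hB T hΦ
    rw [runExp_add] at this
    rw [Finset.sum_range_succ, runExp_succ]
    linarith

/-! ### Likelihood ratios -/

/-- The sign `±1` of a bit. -/
noncomputable def boolSign (b : Bool) : ℝ := if b then 1 else -1

lemma boolSign_sq (b : Bool) : boolSign b ^ 2 = 1 := by
  cases b <;> simp [boolSign]

/-- Likelihood ratio of one observation between the strategies `S_(u,v)` and `S_0`. -/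
noncomputable def obsRatio (ε : ℝ) (u : Fin k) (v : Fin n) (o : RObs k n) : ℝ :=
  match o.2.1 with
  | none => 1
  | some (u', i) =>
      if u' = u then 1 + 2 * ε * boolSign (i ^^ o.2.2) * boolSign (o.1 u v) else 1

/-- Likelihood ratio of an observed history between the strategies `S_(u,v)` and `S_0`. -/
noncomputable def likelihood (ε : ℝ) (u : Fin k) (h : List (RObs k n)) (v : Fin n) : ℝ :=
  (h.map (obsRatio ε u v)).prod

lemma obsLoss_some (ε : ℝ) (u : Fin k) (v : Fin n) (A : RAdviceM k n) (i : RArm k) (l : Bool) :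
    obsLoss ε (some (u, v)) A i l =
      obsRatio ε u v (A, i, l) * obsLoss ε (none : RStrategy k n) A i l := by
  rcases i with _ | ⟨u', i⟩
  · simp [obsLoss, obsRatio]
  · by_cases hu : u' = u
    · subst hu
      rcases hA : A u' v <;> rcases hc : (i ^^ l) <;>
        simp [obsLoss, obsRatio, correctProb, batchFactor, boolSign, hA, hc] <;> ring
    · simp [obsLoss, obsRatio, correctProb, batchFactor, hu]

lemma runExp_some (ε : ℝ) (u : Fin k) (v : Fin n) (B : RSBI k n) (t : ℕ)
    (F : List (RObs k n) → ℝ) :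
    runExp ε (some (u, v)) B t F =
      runExp ε (none : RStrategy k n) B t (fun h => likelihood ε u h v * F h) := by
  induction t generalizing F with
  | zero => simp [runExp_zero, likelihood]
  | succ t ih =>
    rw [runExp_succ, runExp_succ, ih]
    congr 1
    funext h
    unfold step
    simp only [obsLoss_some, likelihood, List.map_cons, List.prod_cons, Finset.mul_sum]
    refine Finset.sum_congr rfl fun A _ => Finset.sum_congr rfl fun i _ =>
      Finset.sum_congr rfl fun l _ => ?_
    ring

/-! ### The second-moment potential -/

lemma sum_boolSign_mul_boolSign (v v' : Fin n) :
    (1 / 2 : ℝ) ^ n * ∑ a : Fin n → Bool, boolSign (a v) * boolSign (a v') =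
      if v = v' then 1 else 0 := by
  by_cases hv : v = v'
  · subst hv
    simp [← pow_two, boolSign_sq]
  · let flip : (Fin n → Bool) → Fin n → Bool := fun a w => if w = v then !(a w) else a w
    have hflip : Function.Involutive flip := by
      intro a
      funext w
      by_cases hw : w = v <;> simp [flip, hw]
    have hsum := Equiv.sum_comp (Function.Involutive.toPerm flip hflip)
      fun a : Fin n → Bool => boolSign (a v) * boolSign (a v')
    have hneg : ∀ a : Fin n → Bool, boolSign (Function.Involutive.toPerm flip hflip a v) *
        boolSign (Function.Involutive.toPerm flip hflip a v') =
        -(boolSign (a v) * boolSign (a v')) := by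
      intro a
      simp only [Function.Involutive.coe_toPerm, flip, if_true, if_neg (Ne.symm hv)]
      cases a v <;> cases a v' <;> simp [boolSign]
    simp only [hneg, Finset.sum_neg_distrib] at hsum
    rw [if_neg hv]
    have : ∑ a : Fin n → Bool, boolSign (a v) * boolSign (a v') = 0 := by linarith
    rw [this, mul_zero]

lemma sum_sq_signed_sum (w : Fin n → ℝ) :
    (1 / 2 : ℝ) ^ n * ∑ a : Fin n → Bool, (∑ v, boolSign (a v) * w v) ^ 2 = ∑ v, w v ^ 2 := by
  have hexp : ∀ a : Fin n → Bool, (∑ v, boolSign (a v) * w v) ^ 2 =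
      ∑ v, ∑ v', w v * w v' * (boolSign (a v) * boolSign (a v')) := by
    intro a
    rw [pow_two, Finset.sum_mul_sum]
    exact Finset.sum_congr rfl fun v _ => Finset.sum_congr rfl fun v' _ => by ring
  simp only [hexp]
  rw [Finset.sum_comm, Finset.mul_sum]
  refine Finset.sum_congr rfl fun v _ => ?_
  rw [Finset.sum_comm, Finset.mul_sum]
  have hin : ∀ v', (1 / 2 : ℝ) ^ n *
      ∑ a : Fin n → Bool, w v * w v' * (boolSign (a v) * boolSign (a v')) =
      w v * w v' * if v = v' then 1 else 0 := by
    intro v'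
    rw [← sum_boolSign_mul_boolSign, ← Finset.mul_sum]
    ring
  simp only [hin]
  simp [pow_two]

/-- The average of a weight vector. -/
noncomputable def mean (w : Fin n → ℝ) : ℝ := (∑ v, w v) / n

/-- Expected squared deviation of the mean likelihood ratio from `1` after `r` further pulls,
when the next advice vector is not yet drawn. -/
noncomputable def freshPot (ε : ℝ) (w : Fin n → ℝ) (r : ℕ) : ℝ :=
  (mean w - 1) ^ 2 + ((1 + 4 * ε ^ 2) ^ r - 1) * (∑ v, w v ^ 2) / n ^ 2

/-- Expected squared deviation of the mean likelihood ratio from `1` after `r` further pulls,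
when the next advice vector is `a`. -/
noncomputable def knownPot (ε : ℝ) (w : Fin n → ℝ) (a : Fin n → Bool) : ℕ → ℝ
  | 0 => (mean w - 1) ^ 2
  | r + 1 => 1 / 2 * ∑ c : Bool,
      freshPot ε (fun v => (1 + 2 * ε * boolSign c * boolSign (a v)) * w v) r

lemma one_le_pow_growth (ε : ℝ) (r : ℕ) : 1 ≤ (1 + 4 * ε ^ 2) ^ r :=
  one_le_pow₀ (by nlinarith [sq_nonneg ε])

lemma sq_le_freshPot (ε : ℝ) (w : Fin n → ℝ) (r : ℕ) : (mean w - 1) ^ 2 ≤ freshPot ε w r := by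
  unfold freshPot
  have h1 := one_le_pow_growth ε r
  have : 0 ≤ ((1 + 4 * ε ^ 2) ^ r - 1) * (∑ v, w v ^ 2) / n ^ 2 := by
    refine div_nonneg (mul_nonneg (by linarith) (Finset.sum_nonneg fun v _ => sq_nonneg _)) ?_
    positivity
  linarith

lemma knownPot_succ (ε : ℝ) (w : Fin n → ℝ) (a : Fin n → Bool) (r : ℕ) :
    knownPot ε w a (r + 1) = (mean w - 1) ^ 2 +
      4 * ε ^ 2 * (∑ v, boolSign (a v) * w v) ^ 2 / n ^ 2 +
      ((1 + 4 * ε ^ 2) ^ r - 1) * (1 + 4 * ε ^ 2) * (∑ v, w v ^ 2) / n ^ 2 := by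
  have hlin : ∀ x : ℝ, ∑ v, (1 + 2 * ε * x * boolSign (a v)) * w v =
      ∑ v, w v + 2 * ε * x * ∑ v, boolSign (a v) * w v := by
    intro x
    rw [Finset.mul_sum, ← Finset.sum_add_distrib]
    exact Finset.sum_congr rfl fun v _ => by ring
  have hsq : ∀ x : ℝ, x ^ 2 = 1 → ∑ v, ((1 + 2 * ε * x * boolSign (a v)) * w v) ^ 2 =
      (1 + 4 * ε ^ 2) * ∑ v, w v ^ 2 + 4 * ε * x * ∑ v, boolSign (a v) * w v ^ 2 := by
    intro x hx
    rw [Finset.mul_sum, Finset.mul_sum, ← Finset.sum_add_distrib]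
    refine Finset.sum_congr rfl fun v _ => ?_
    have hb := boolSign_sq (a v)
    linear_combination (4 * ε ^ 2 * w v ^ 2 * x ^ 2) * hb + 4 * ε ^ 2 * w v ^ 2 * hx
  simp only [knownPot, freshPot, mean, Fintype.sum_bool, hlin, hsq _ (boolSign_sq _)]
  simp only [boolSign, if_true, Bool.false_eq_true, if_false]
  ring

lemma sq_le_knownPot (ε : ℝ) (w : Fin n → ℝ) (a : Fin n → Bool) (r : ℕ) :
    (mean w - 1) ^ 2 ≤ knownPot ε w a r := by
  cases r with
  | zero => exact le_rfl
  | succ r =>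
    rw [knownPot_succ]
    have h1 := one_le_pow_growth ε r
    have h2 : 0 ≤ ((1 + 4 * ε ^ 2) ^ r - 1) * (1 + 4 * ε ^ 2) * (∑ v, w v ^ 2) / n ^ 2 := by
      refine div_nonneg (mul_nonneg (mul_nonneg (by linarith) (by positivity))
        (Finset.sum_nonneg fun v _ => sq_nonneg _)) ?_
      positivity
    have h3 : 0 ≤ 4 * ε ^ 2 * (∑ v, boolSign (a v) * w v) ^ 2 / n ^ 2 := by positivity
    linarith

lemma avg_knownPot (ε : ℝ) (w : Fin n → ℝ) (r : ℕ) :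
    ∑ a : Fin n → Bool, (1 / 2 : ℝ) ^ n * knownPot ε w a r = freshPot ε w r := by
  have hc : ∀ c : ℝ, ∑ _a : Fin n → Bool, (1 / 2 : ℝ) ^ n * c = c := by
    intro c
    simp
  cases r with
  | zero => simp [knownPot, freshPot]
  | succ r =>
    have hsplit : ∀ a : Fin n → Bool, (1 / 2 : ℝ) ^ n * knownPot ε w a (r + 1) =
        (1 / 2 : ℝ) ^ n * ((mean w - 1) ^ 2 +
          ((1 + 4 * ε ^ 2) ^ r - 1) * (1 + 4 * ε ^ 2) * (∑ v, w v ^ 2) / n ^ 2) +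
        4 * ε ^ 2 / n ^ 2 * ((1 / 2 : ℝ) ^ n * (∑ v, boolSign (a v) * w v) ^ 2) := by
      intro a
      rw [knownPot_succ]
      ring
    simp only [hsplit]
    rw [Finset.sum_add_distrib, hc, ← Finset.mul_sum, ← Finset.mul_sum, sum_sq_signed_sum]
    unfold freshPot
    ring

/-- The number of pulls of batch `u` in an observed history. -/
def pulls (u : Fin k) (h : List (RObs k n)) : ℕ :=
  h.countP fun o => armBatch o.2.1 = some u

/-- The second-moment potential with a budget of `m` pulls of batch `u`. -/
noncomputable def pot (ε : ℝ) (u : Fin k) (m : ℕ) (h : List (RObs k n)) : ℝ :=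
  if pulls u h ≤ m then
    ∑ a, advFactor h u a * knownPot ε (likelihood ε u h) a (m - pulls u h)
  else 0

lemma sq_le_pot (ε : ℝ) (u : Fin k) (m : ℕ) (h : List (RObs k n)) (hm : pulls u h ≤ m) :
    (mean (likelihood ε u h) - 1) ^ 2 ≤ pot ε u m h := by
  rw [pot, if_pos hm]
  calc (mean (likelihood ε u h) - 1) ^ 2
      = ∑ a, advFactor h u a * (mean (likelihood ε u h) - 1) ^ 2 := by
        rw [← Finset.sum_mul, sum_advFactor, one_mul]
    _ ≤ _ := Finset.sum_le_sum fun a _ =>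
        mul_le_mul_of_nonneg_left (sq_le_knownPot _ _ _ _) (advFactor_nonneg _ _ _)

lemma pot_nonneg (ε : ℝ) (u : Fin k) (m : ℕ) (h : List (RObs k n)) : 0 ≤ pot ε u m h := by
  by_cases hm : pulls u h ≤ m
  · exact (sq_nonneg _).trans (sq_le_pot ε u m h hm)
  · rw [pot, if_neg hm]

/-- Conditional on the advice and the pulled arm, the potential does not grow. -/
lemma sum_obsLoss_pot_le (ε : ℝ) (u : Fin k) (m : ℕ) (h : List (RObs k n))
    (hm : pulls u h ≤ m) (A : RAdviceM k n) (i : RArm k) :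
    ∑ l, obsLoss ε (none : RStrategy k n) A i l * pot ε u m ((A, i, l) :: h) ≤
      knownPot ε (likelihood ε u h) (A u) (m - pulls u h) := by
  by_cases hi : armBatch i = some u
  · obtain ⟨c, rfl⟩ : ∃ c, i = some (u, c) := by
      rcases i with _ | ⟨u', c⟩
      · simp [armBatch] at hi
      · exact ⟨c, by simpa [armBatch] using hi⟩
    have hp : ∀ l, pulls u ((A, some (u, c), l) :: h) = pulls u h + 1 := by
      intro l
      simp [pulls, armBatch]
    have hloss : ∀ l, obsLoss ε (none : RStrategy k n) A (some (u, c)) l = 1 / 2 := by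
      intro l
      simp [obsLoss, correctProb, batchFactor]
    simp only [hloss]
    rcases hr : m - pulls u h with _ | r
    · have hm' : ¬ pulls u h + 1 ≤ m := by omega
      simp only [pot, hp, if_neg hm', mul_zero, Finset.sum_const_zero]
      exact sq_nonneg _
    · have hm' : pulls u h + 1 ≤ m := by omega
      have hr' : m - (pulls u h + 1) = r := by omega
      have hadv : ∀ l a, advFactor ((A, some (u, c), l) :: h) u a = (1 / 2 : ℝ) ^ n := by
        intro l a
        simp [advFactor, armBatch]
      have hlik : ∀ l, likelihood ε u ((A, some (u, c), l) :: h) =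
          fun v => (1 + 2 * ε * boolSign (c ^^ l) * boolSign (A u v)) * likelihood ε u h v := by
        intro l
        funext v
        simp [likelihood, obsRatio]
      simp only [pot, hp, if_pos hm', hr', hadv, avg_knownPot, hlik]
      rw [knownPot, Finset.mul_sum]
      refine le_of_eq ?_
      cases c
      · simp only [Fintype.sum_bool, Bool.false_xor]
      · simp only [Fintype.sum_bool, Bool.true_xor, Bool.not_true, Bool.not_false]
        exact add_comm _ _
  · have hp : ∀ l, pulls u ((A, i, l) :: h) = pulls u h := by
      intro l
      simp [pulls, hi]
    have hlik : ∀ l, likelihood ε u ((A, i, l) :: h) = likelihood ε u h := by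
      intro l
      funext v
      have : obsRatio ε u v (A, i, l) = 1 := by
        rcases i with _ | ⟨u', c⟩
        · rfl
        · have : u' ≠ u := by simpa [armBatch] using hi
          simp [obsRatio, this]
      simp [likelihood, this]
    have hadv : ∀ l a, advFactor ((A, i, l) :: h) u a = if a = A u then 1 else 0 := by
      intro l a
      simp [advFactor, hi]
    simp only [pot, hp, if_pos hm, hlik, hadv]
    rw [← Finset.sum_mul, sum_obsLoss]
    simp

lemma step_pot_le (ε : ℝ) {B : RSBI k n} (hB : IsRSBI B) (u : Fin k) (m : ℕ)
    (h : List (RObs k n)) :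
    step ε (none : RStrategy k n) B (pot ε u m) h ≤ B.decide h none * pot ε u m h := by
  unfold step
  refine mul_le_mul_of_nonneg_left ?_ ((hB.1 h).1 none)
  by_cases hm : pulls u h ≤ m
  · calc _ ≤ ∑ A : RAdviceM k n, (∏ u, advFactor h u (A u)) *
          knownPot ε (likelihood ε u h) (A u) (m - pulls u h) := by
          refine Finset.sum_le_sum fun A _ => mul_le_mul_of_nonneg_left ?_
            (Finset.prod_nonneg fun u _ => advFactor_nonneg _ _ _)
          calc _ ≤ ∑ i : RArm k, B.pull h A i *
                knownPot ε (likelihood ε u h) (A u) (m - pulls u h) :=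
                Finset.sum_le_sum fun i _ => mul_le_mul_of_nonneg_left
                  (sum_obsLoss_pot_le ε u m h hm A i) ((hB.2 h A).1 i)
            _ = _ := by rw [← Finset.sum_mul, (hB.2 h A).2, one_mul]
      _ = pot ε u m h := by
          rw [sum_pi_prod_mul_eval _ (sum_advFactor h) u
            (fun a => knownPot ε (likelihood ε u h) a (m - pulls u h)), pot, if_pos hm]
  · have hp : ∀ o : RObs k n, pot ε u m (o :: h) = 0 := by
      intro o
      have : pulls u h ≤ pulls u (o :: h) := by
        unfold pulls
        rw [List.countP_cons]
        omega
      rw [pot, if_neg (by omega)]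
    simp [hp, pot_nonneg]

lemma pot_nil (ε : ℝ) (u : Fin k) (m : ℕ) (hn : 0 < n) :
    pot ε u m ([] : List (RObs k n)) = ((1 + 4 * ε ^ 2) ^ m - 1) / n := by
  have hn' : (n : ℝ) ≠ 0 := by positivity
  have hlik : likelihood ε u ([] : List (RObs k n)) = fun _ => 1 := by
    funext v
    simp [likelihood]
  simp only [pot, pulls, List.countP_nil, Nat.zero_le, if_true, Nat.sub_zero, advFactor,
    avg_knownPot, hlik]
  simp [freshPot, mean]
  field_simp
  ring

/-! ### Counting pulls -/

/-- Indicator that the most recent pull was from batch `u`. -/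
noncomputable def lastPull (u : Fin k) : List (RObs k n) → ℝ
  | [] => 0
  | o :: _ => if armBatch o.2.1 = some u then 1 else 0

lemma sum_lastPull_le_one (h : List (RObs k n)) : ∑ u, lastPull u h ≤ 1 := by
  rcases h with _ | ⟨⟨A, i, l⟩, h⟩
  · simp [lastPull]
  · rcases i with _ | ⟨u', c⟩ <;> simp [lastPull, armBatch]

lemma step_pulls (ε : ℝ) (s : RStrategy k n) {B : RSBI k n} (hB : IsRSBI B) (u : Fin k)
    (h : List (RObs k n)) :
    step ε s B (fun h => (pulls u h : ℝ)) h =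
      step ε s B (lastPull u) h + B.decide h none * pulls u h := by
  rw [← step_const ε s hB, ← step_add]
  have hcons : ∀ o : RObs k n, (pulls u (o :: h) : ℝ) = lastPull u (o :: h) + pulls u h := by
    intro o
    by_cases ho : armBatch o.2.1 = some u
    · simp [pulls, lastPull, ho, add_comm]
    · simp [pulls, lastPull, ho]
  simp only [step, hcons]

lemma decide_add_le {B : RSBI k n} (hB : IsRSBI B) (h : List (RObs k n))
    (b : Option (Fin k)) : B.decide h (some b) + B.decide h none ≤ 1 := by
  rw [← (hB.1 h).2, Fintype.sum_option, add_comm]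
  have := Finset.single_le_sum (f := fun b => B.decide h (some b))
    (fun b _ => (hB.1 h).1 (some b)) (Finset.mem_univ b)
  linarith

lemma decide_add_add_le {B : RSBI k n} (hB : IsRSBI B) (h : List (RObs k n))
    (u : Fin k) :
    B.decide h (some none) + B.decide h (some (some u)) + B.decide h none ≤ 1 := by
  rw [← (hB.1 h).2, Fintype.sum_option, Fintype.sum_option]
  have := Finset.single_le_sum (f := fun u => B.decide h (some (some u)))
    (fun u _ => (hB.1 h).1 (some (some u))) (Finset.mem_univ u)
  linarith

lemma sum_runExp_decide_mul_pulls_le {ε : ℝ} (hε : 0 < ε) (hε' : ε ≤ 0.1) (s : RStrategy k n)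
    {B : RSBI k n} (hB : IsRSBI B) (u : Fin k) (b : Option (Fin k)) (T : ℕ) :
    ∑ t ∈ Finset.range T, runExp ε s B t (fun h => B.decide h (some b) * pulls u h) ≤
      ∑ t ∈ Finset.range T, runExp ε s B (t + 1) (lastPull u) := by
  have hΦ : ∀ h : List (RObs k n),
      (B.decide h (some b) * pulls u h - step ε s B (lastPull u) h) +
        step ε s B (fun h => (pulls u h : ℝ)) h ≤ pulls u h := by
    intro h
    rw [step_pulls ε s hB]
    have h1 := decide_add_le hB h b
    have h2 : (0 : ℝ) ≤ pulls u h := Nat.cast_nonneg _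
    nlinarith
  have hsum := sum_runExp_add_le hε hε' s hB hΦ T
  have hpos : 0 ≤ runExp ε s B T (fun h => (pulls u h : ℝ)) :=
    runExp_nonneg hε hε' s hB T fun h => Nat.cast_nonneg _
  simp only [runExp_sub, Finset.sum_sub_distrib] at hsum
  simp only [runExp_succ]
  have h0 : ((pulls u ([] : List (RObs k n)) : ℕ) : ℝ) = 0 := by simp [pulls]
  linarith

/-! ### Output probabilities -/

lemma haltProb_eq_runExp (ε : ℝ) (s : RStrategy k n) (B : RSBI k n) (t : ℕ)
    (b : Option (Fin k)) :
    haltProb ε s B t b = runExp ε s B t (fun h => B.decide h (some b)) := rfl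

lemma surviveProb_eq_runExp (ε : ℝ) (s : RStrategy k n) (B : RSBI k n) (t : ℕ) :
    surviveProb ε s B t = runExp ε s B t (fun _ => 1) := by
  simp [surviveProb, runExp]

lemma haltProb_nonneg {ε : ℝ} (hε : 0 < ε) (hε' : ε ≤ 0.1) (s : RStrategy k n) {B : RSBI k n}
    (hB : IsRSBI B) (t : ℕ) (b : Option (Fin k)) : 0 ≤ haltProb ε s B t b :=
  runExp_nonneg hε hε' s hB t fun h => (hB.1 h).1 _

lemma sum_haltProb_add_le_one {ε : ℝ} (hε : 0 < ε) (hε' : ε ≤ 0.1) (s : RStrategy k n)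
    {B : RSBI k n} (hB : IsRSBI B) (u : Fin k) (T : ℕ) :
    ∑ t ∈ Finset.range T, (haltProb ε s B t none + haltProb ε s B t (some u)) ≤ 1 := by
  have hΦ : ∀ h : List (RObs k n),
      (B.decide h (some none) + B.decide h (some (some u))) + step ε s B (fun _ => 1) h ≤ 1 := by
    intro h
    rw [step_const ε s hB, mul_one]
    exact decide_add_add_le hB h u
  have hsum := sum_runExp_add_le hε hε' s hB hΦ T
  have hpos : 0 ≤ runExp ε s B T (fun _ => 1) :=
    runExp_nonneg hε hε' s hB T fun _ => zero_le_one
  simp only [runExp_add] at hsum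
  simp only [haltProb_eq_runExp]
  linarith

lemma outProb_add_le_one {ε : ℝ} (hε : 0 < ε) (hε' : ε ≤ 0.1) (s : RStrategy k n)
    {B : RSBI k n} (hB : IsRSBI B) (u : Fin k) :
    outProb ε s B none + outProb ε s B (some u) ≤ 1 := by
  unfold outProb
  rw [← ENNReal.tsum_add]
  refine ENNReal.tsum_le_of_sum_range_le fun T => ?_
  simp only [← ENNReal.ofReal_add (haltProb_nonneg hε hε' s hB _ _)
    (haltProb_nonneg hε hε' s hB _ _)]
  rw [← ENNReal.ofReal_sum_of_nonneg fun t _ => add_nonneg (haltProb_nonneg hε hε' s hB _ _)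
    (haltProb_nonneg hε hε' s hB _ _)]
  exact ENNReal.ofReal_le_one.2 (sum_haltProb_add_le_one hε hε' s hB u T)

/-- A good algorithm rarely outputs batch `0` under a strategy with a special batch. -/
lemma sum_haltProb_none_le {ε : ℝ} (hε : 0 < ε) (hε' : ε ≤ 0.1) {B : RSBI k n}
    (hB : IsRSBI B) (hgood : GoodSBI ε B) (u : Fin k) (v : Fin n) (T : ℕ) :
    ∑ t ∈ Finset.range T, haltProb ε (some (u, v)) B t none ≤ 0.05 := by
  have hnn : ∀ t ∈ Finset.range T, 0 ≤ haltProb ε (some (u, v)) B t none :=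
    fun t _ => haltProb_nonneg hε hε' _ hB t _
  have hle : ENNReal.ofReal (∑ t ∈ Finset.range T, haltProb ε (some (u, v)) B t none) ≤
      outProb ε (some (u, v)) B none := by
    rw [ENNReal.ofReal_sum_of_nonneg hnn]
    exact ENNReal.sum_le_tsum _
  have htot := (add_le_add hle (hgood (some (u, v)))).trans
    (outProb_add_le_one hε hε' (some (u, v)) hB u)
  rw [← ENNReal.ofReal_add (Finset.sum_nonneg hnn) (by norm_num), ENNReal.ofReal_le_one] at htot
  norm_num at htot ⊢
  linarith

lemma exists_le_sum_haltProb_none {ε : ℝ} (hε : 0 < ε) (hε' : ε ≤ 0.1) {B : RSBI k n}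
    (hB : IsRSBI B) (hgood : GoodSBI ε B) :
    ∃ T : ℕ, 0.9 < ∑ t ∈ Finset.range T, haltProb ε (none : RStrategy k n) B t none := by
  have hlt : ENNReal.ofReal 0.9 < outProb ε (none : RStrategy k n) B none :=
    lt_of_lt_of_le ((ENNReal.ofReal_lt_ofReal_iff (by norm_num)).2 (by norm_num)) (hgood none)
  rw [outProb, ENNReal.tsum_eq_iSup_nat, lt_iSup_iff] at hlt
  obtain ⟨T, hT⟩ := hlt
  rw [← ENNReal.ofReal_sum_of_nonneg fun t _ => haltProb_nonneg hε hε' _ hB t _] at hT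
  exact ⟨T, (ENNReal.ofReal_lt_ofReal_iff_of_nonneg (by norm_num)).1 hT⟩

/-! ### The lower bound for a single batch -/

lemma likelihood_nonneg {ε : ℝ} (hε : 0 < ε) (hε' : ε ≤ 0.1) (u : Fin k) (h : List (RObs k n))
    (v : Fin n) : 0 ≤ likelihood ε u h v := by
  norm_num at hε'
  refine List.prod_nonneg fun x hx => ?_
  obtain ⟨⟨A, i, l⟩, -, rfl⟩ := List.mem_map.1 hx
  rcases i with _ | ⟨u', c⟩
  · simp [obsRatio]
  · simp only [obsRatio]
    split_ifs
    · rcases A u v <;> rcases (c ^^ l) <;> simp [boolSign] <;> linarith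
    · exact zero_le_one

lemma sum_runExp_decide_mul_mean_le {ε : ℝ} (hε : 0 < ε) (hε' : ε ≤ 0.1) {B : RSBI k n}
    (hB : IsRSBI B) (hgood : GoodSBI ε B) (hn : 0 < n) (u : Fin k) (T : ℕ) :
    ∑ t ∈ Finset.range T, runExp ε (none : RStrategy k n) B t
      (fun h => B.decide h (some none) * mean (likelihood ε u h)) ≤ 0.05 := by
  have heq : ∀ t, runExp ε (none : RStrategy k n) B t
      (fun h => B.decide h (some none) * mean (likelihood ε u h)) =
      (1 / n : ℝ) * ∑ v, haltProb ε (some (u, v)) B t none := by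
    intro t
    simp only [haltProb_eq_runExp, runExp_some]
    rw [← runExp_sum, ← runExp_const_mul]
    congr 1
    funext h
    rw [mean, ← Finset.sum_mul]
    ring
  simp only [heq]
  rw [← Finset.mul_sum, Finset.sum_comm]
  have hn' : (0 : ℝ) < n := by exact_mod_cast hn
  calc (1 / n : ℝ) * ∑ v, ∑ t ∈ Finset.range T, haltProb ε (some (u, v)) B t none
      ≤ (1 / n : ℝ) * ∑ _v : Fin n, (0.05 : ℝ) := by
        gcongr with v
        exact sum_haltProb_none_le hε hε' hB hgood u v T
    _ = 0.05 := by
        simp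
        field_simp

lemma sum_runExp_sq_dev_le {ε : ℝ} (hε : 0 < ε) (hε' : ε ≤ 0.1) {B : RSBI k n}
    (hB : IsRSBI B) (hn : 0 < n) (u : Fin k) (m T : ℕ) :
    ∑ t ∈ Finset.range T, runExp ε (none : RStrategy k n) B t
      (fun h => B.decide h (some none) *
        if pulls u h ≤ m then (mean (likelihood ε u h) - 1) ^ 2 else 0) ≤
      ((1 + 4 * ε ^ 2) ^ m - 1) / n := by
  have hΦ : ∀ h : List (RObs k n), (B.decide h (some none) *
      if pulls u h ≤ m then (mean (likelihood ε u h) - 1) ^ 2 else 0) +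
        step ε (none : RStrategy k n) B (pot ε u m) h ≤ pot ε u m h := by
    intro h
    have h1 := step_pot_le ε hB u m h
    have h2 := decide_add_le hB h none
    have h3 := pot_nonneg ε u m h
    have h4 : (if pulls u h ≤ m then (mean (likelihood ε u h) - 1) ^ 2 else 0) ≤
        pot ε u m h := by
      split_ifs with hm
      · exact sq_le_pot ε u m h hm
      · exact h3
    have h5 := mul_le_mul_of_nonneg_left h4 ((hB.1 h).1 (some none))
    nlinarith
  have hsum := sum_runExp_add_le hε hε' _ hB hΦ T
  have hpos := runExp_nonneg hε hε' (none : RStrategy k n) hB T (pot_nonneg ε u m)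
  rw [pot_nil ε u m hn] at hsum
  linarith

lemma growth_pow_le {ε : ℝ} (hε : 0 < ε) {x : ℝ} (hx : 1 ≤ x) :
    (1 + 4 * ε ^ 2) ^ ⌊Real.log x / (4 * ε ^ 2)⌋₊ ≤ x := by
  have hlog : 0 ≤ Real.log x := Real.log_nonneg hx
  have hfl := Nat.floor_le (div_nonneg hlog (by positivity : (0 : ℝ) ≤ 4 * ε ^ 2))
  rw [le_div_iff₀ (by positivity)] at hfl
  calc (1 + 4 * ε ^ 2) ^ ⌊Real.log x / (4 * ε ^ 2)⌋₊
      ≤ Real.exp (4 * ε ^ 2) ^ ⌊Real.log x / (4 * ε ^ 2)⌋₊ := by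
        gcongr
        linarith [Real.add_one_le_exp (4 * ε ^ 2)]
    _ = Real.exp (⌊Real.log x / (4 * ε ^ 2)⌋₊ * (4 * ε ^ 2)) := (Real.exp_nat_mul _ _).symm
    _ ≤ Real.exp (Real.log x) := Real.exp_le_exp.2 hfl
    _ = x := Real.exp_log (by linarith)

/-- Under `S_0`, an algorithm that is correct with probability `0.9` within `T` rounds pulls
every batch at least `ln(n/10) / (20ε²)` times in expectation. -/
lemma le_sum_runExp_lastPull {ε : ℝ} (hε : 0 < ε) (hε' : ε ≤ 0.1) {B : RSBI k n}
    (hB : IsRSBI B) (hgood : GoodSBI ε B) (hn : 10 ≤ n) (u : Fin k) {T : ℕ}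
    (hT : 0.9 < ∑ t ∈ Finset.range T, haltProb ε (none : RStrategy k n) B t none) :
    Real.log ((n : ℝ) / 10) / (20 * ε ^ 2) ≤
      ∑ t ∈ Finset.range T, runExp ε (none : RStrategy k n) B (t + 1) (lastPull u) := by
  by_contra! hlt
  have hn10 : (10 : ℝ) ≤ n := by exact_mod_cast hn
  set x := Real.log ((n : ℝ) / 10) / (4 * ε ^ 2) with hx
  set m := ⌊x⌋₊ with hm
  have hpow : (1 + 4 * ε ^ 2) ^ m ≤ (n : ℝ) / 10 :=
    growth_pow_le hε (by rw [le_div_iff₀ (by norm_num)]; linarith)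
  have hpulls := sum_runExp_decide_mul_pulls_le hε hε' (none : RStrategy k n) hB u none T
  have hmean := sum_runExp_decide_mul_mean_le hε hε' hB hgood (by omega) u T
  have hdev := sum_runExp_sq_dev_le hε hε' hB (by omega) u m T
  have hdev' : ((1 + 4 * ε ^ 2) ^ m - 1) / (n : ℝ) ≤ 1 / 10 := by
    rw [div_le_iff₀ (by linarith)]
    linarith
  have hxm : x < m + 1 := Nat.lt_floor_add_one x
  have hm1 : (0 : ℝ) < m + 1 := by positivity
  have hlt5 : Real.log ((n : ℝ) / 10) / (20 * ε ^ 2) = x / 5 := by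
    rw [hx]
    ring
  have hpoint : ∀ h : List (RObs k n), B.decide h (some none) ≤
      (B.decide h (some none) * mean (likelihood ε u h) +
        (1 / 4) * B.decide h (some none)) +
      ((B.decide h (some none) *
        if pulls u h ≤ m then (mean (likelihood ε u h) - 1) ^ 2 else 0) +
      (1 / (m + 1)) * (B.decide h (some none) * pulls u h)) := by
    intro h
    have hD := (hB.1 h).1 (some none)
    have hL : 0 ≤ mean (likelihood ε u h) :=
      div_nonneg (Finset.sum_nonneg fun v _ => likelihood_nonneg hε hε' u h v)
        (Nat.cast_nonneg _)
    have hp : (0 : ℝ) ≤ 1 / (m + 1) * pulls u h := by positivity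
    have key : 1 ≤ mean (likelihood ε u h) + 1 / 4 +
        (if pulls u h ≤ m then (mean (likelihood ε u h) - 1) ^ 2 else 0) +
        1 / (m + 1) * pulls u h := by
      split_ifs with hc
      · nlinarith [sq_nonneg (mean (likelihood ε u h) - 1 / 2)]
      · have hc' : (m : ℝ) + 1 ≤ pulls u h := by exact_mod_cast not_le.1 hc
        have : 1 ≤ 1 / ((m : ℝ) + 1) * pulls u h := by
          rw [one_div, ← div_eq_inv_mul, le_div_iff₀ hm1]
          linarith
        linarith
    nlinarith [mul_le_mul_of_nonneg_left key hD]
  have hsum := Finset.sum_le_sum fun t (_ : t ∈ Finset.range T) =>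
    runExp_mono hε hε' (none : RStrategy k n) hB t hpoint
  simp only [runExp_add, runExp_const_mul, Finset.sum_add_distrib, ← Finset.mul_sum] at hsum
  simp only [haltProb_eq_runExp] at hT
  have hfew : 1 / ((m : ℝ) + 1) * ∑ t ∈ Finset.range T, runExp ε (none : RStrategy k n) B t
      (fun h => B.decide h (some none) * pulls u h) ≤ 1 / 5 := by
    rw [one_div, ← div_eq_inv_mul, div_le_iff₀ hm1]
    linarith
  norm_num at hT hmean
  linarith

end BwE

/-- every good SBI algorithm satisfies
`T(A', S_0) ≥ k·ln(n/10)/(20ε²)`. -/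
theorem stmt13 (k n : ℕ) (hk : 1 ≤ k) (hn : 10 ≤ n) (ε : ℝ) (hε : 0 < ε) (hε' : ε ≤ 0.1)
    (B : RSBI k n) (hB : IsRSBI B) (hgood : GoodSBI ε B) :
    ENNReal.ofReal ((k : ℝ) * Real.log ((n : ℝ) / 10) / (20 * ε ^ 2))
      ≤ expRounds ε (none : RStrategy k n) B := by
  obtain ⟨T, hT⟩ := BwE.exists_le_sum_haltProb_none hε hε' hB hgood
  have hsurv : ∀ t, 0 ≤ surviveProb ε (none : RStrategy k n) B t := fun t => by
    rw [BwE.surviveProb_eq_runExp]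
    exact BwE.runExp_nonneg hε hε' _ hB t fun _ => zero_le_one
  have hreal : (k : ℝ) * Real.log ((n : ℝ) / 10) / (20 * ε ^ 2) ≤
      ∑ t ∈ Finset.range T, surviveProb ε (none : RStrategy k n) B (t + 1) := by
    calc (k : ℝ) * Real.log ((n : ℝ) / 10) / (20 * ε ^ 2)
        = ∑ _u : Fin k, Real.log ((n : ℝ) / 10) / (20 * ε ^ 2) := by simp [mul_div_assoc]
      _ ≤ ∑ u : Fin k, ∑ t ∈ Finset.range T,
            BwE.runExp ε (none : RStrategy k n) B (t + 1) (BwE.lastPull u) :=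
          Finset.sum_le_sum fun u _ =>
            BwE.le_sum_runExp_lastPull hε hε' hB hgood hn u hT
      _ ≤ ∑ t ∈ Finset.range T, surviveProb ε (none : RStrategy k n) B (t + 1) := by
          rw [Finset.sum_comm]
          refine Finset.sum_le_sum fun t _ => ?_
          rw [← BwE.runExp_sum, BwE.surviveProb_eq_runExp]
          exact BwE.runExp_mono hε hε' _ hB _ BwE.sum_lastPull_le_one
  calc ENNReal.ofReal ((k : ℝ) * Real.log ((n : ℝ) / 10) / (20 * ε ^ 2))
      ≤ ENNReal.ofReal (∑ t ∈ Finset.range T, surviveProb ε (none : RStrategy k n) B (t + 1)) :=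
        ENNReal.ofReal_le_ofReal hreal
    _ = ∑ t ∈ Finset.range T, ENNReal.ofReal (surviveProb ε (none : RStrategy k n) B (t + 1)) :=
        ENNReal.ofReal_sum_of_nonneg fun t _ => hsurv _
    _ ≤ expRounds ε (none : RStrategy k n) B := ENNReal.sum_le_tsum _
end
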